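/- arXiv:2506.22421 — 3 statements merged into one kernel-verified Lean document; each statement's English description precedes it below -/
import Mathlib

section
/- Let p ≥ 1 and let μ, ν be Borel probability measures on ℝ^{dT} with ∫ |x|_p^p dμ < ∞ and ∫ |x|_p^p dν < ∞. Then AW_p(μ, ν)^p ≤ 2^p · ATV_p(μ, ν)^p. If moreover c_2, …, c_T ≥ 0 are constants such that for every t = 2, …, T and ν_{1:t−1}-almost every x_{1:t−1}, ∫ |x̃_t|_p^p ν_{x_{1:t−1}}(dx̃_t) ≤ c_t · (1 + |x_{1:t−1}|_p^p), then AW_p(μ, ν)^p ≤ 2^p (1 + 2 Σ_{t=1}^{T−1} ∏_{s=t+1}^{T} (1 + c_s)) · TV_p(μ, ν)^p. -/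
/-!
Since `|a - b| ^ p ≤ 2 ^ p * (|a| ^ p + |b| ^ p)`, and the cost vanishes where the paths agree,
every bicausal coupling witnesses `AW_p ^ p ≤ 2 ^ p * ATV_p ^ p`. It remains to bound `ATV_p` by
`TV_p`.

Couple the next states maximally as long as the two processes agree, and independently once they
have separated; this gives a bicausal coupling `π`. Let `γ` be any coupling of the two laws. The
mass that newly separates under `π` at a given step is the smallest possible, so it is at most
the mass that `γ` removes before that step, propagated by the kernel of `ν`, plus the mass that `γ`
adds up to that step. Propagating the weight `1 + |x|_p^p` by the kernel of `ν` costs a factor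
`1 + c_s`, and iterating over the steps produces the sum of products. This controls the mass on the
side of `ν` only; but added minus removed mass depends on the marginals alone, so the mass on the
side of `μ` has the same excess over that of `γ`, whence the factor `2`.
-/

open MeasureTheory ProbabilityTheory
open scoped ENNReal

noncomputable section

/-- The path space `ℝ^{dT}`: `T` time steps with state space `ℝ^d`. -/
abbrev Traj (d T : ℕ) : Type := Fin T → Fin d → ℝ

/-- Restriction of a path to its first `t` coordinates. -/
def restr (d : ℕ) {t T : ℕ} (h : t ≤ T) (x : Traj d T) : Traj d t :=
  fun i => x (Fin.castLE h i)

lemma measurable_restr (d : ℕ) {t T : ℕ} (h : t ≤ T) : Measurable (restr d h) :=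
  measurable_pi_lambda _ (fun i => measurable_pi_apply _)

/-- σ-algebra generated by the first `t` coordinates of the first component. -/
def sigmaX (d T : ℕ) {t : ℕ} (h : t ≤ T) : MeasurableSpace (Traj d T × Traj d T) :=
  MeasurableSpace.comap (fun ω => restr d h ω.1) inferInstance

/-- σ-algebra generated by the first `t` coordinates of the second component. -/
def sigmaY (d T : ℕ) {t : ℕ} (h : t ≤ T) : MeasurableSpace (Traj d T × Traj d T) :=
  MeasurableSpace.comap (fun ω => restr d h ω.2) inferInstance

lemma sigmaX_le (d T : ℕ) {t : ℕ} (h : t ≤ T) :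
    sigmaX d T h ≤ (inferInstance : MeasurableSpace (Traj d T × Traj d T)) :=
  ((measurable_restr d h).comp measurable_fst).comap_le

lemma sigmaY_le (d T : ℕ) {t : ℕ} (h : t ≤ T) :
    sigmaY d T h ≤ (inferInstance : MeasurableSpace (Traj d T × Traj d T)) :=
  ((measurable_restr d h).comp measurable_snd).comap_le

/-- A coupling `π` of two laws on the path space is *bicausal* if for each `t < T`,
`σ(Y_1,…,Y_t)` is conditionally independent of `σ(X_1,…,X_T)` given `σ(X_1,…,X_t)`, and
symmetrically. -/
def IsBicausal (d T : ℕ) (π : Measure (Traj d T × Traj d T)) [IsFiniteMeasure π] : Prop :=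
  ∀ t, 1 ≤ t → ∀ h : t + 1 ≤ T,
    CondIndep (sigmaX d T (Nat.le_of_succ_le h)) (sigmaY d T (Nat.le_of_succ_le h))
      (sigmaX d T (le_refl T)) (sigmaX_le d T (Nat.le_of_succ_le h)) π ∧
    CondIndep (sigmaY d T (Nat.le_of_succ_le h)) (sigmaX d T (Nat.le_of_succ_le h))
      (sigmaY d T (le_refl T)) (sigmaY_le d T (Nat.le_of_succ_le h)) π

/-- The set of couplings of `μ` and `ν`. -/
def Cpl {α : Type*} [MeasurableSpace α] (μ ν : Measure α) : Set (Measure (α × α)) :=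
  {π | IsProbabilityMeasure π ∧ π.map Prod.fst = μ ∧ π.map Prod.snd = ν}

/-- The set of bicausal couplings of `μ` and `ν`. -/
def BCpl {d T : ℕ} (μ ν : Measure (Traj d T)) : Set (Measure (Traj d T × Traj d T)) :=
  {π | π ∈ Cpl μ ν ∧ ∃ _ : IsFiniteMeasure π, IsBicausal d T π}

/-- Weighted total variation distance. -/
def TVw {d T : ℕ} (w : Traj d T → ℝ) (μ ν : Measure (Traj d T)) : ℝ≥0∞ :=
  ⨅ π ∈ Cpl μ ν, ∫⁻ q in {q : Traj d T × Traj d T | q.1 ≠ q.2},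
    (ENNReal.ofReal (w q.1) + ENNReal.ofReal (w q.2)) ∂π

/-- Weighted adapted total variation distance. -/
def ATVw {d T : ℕ} (w : Traj d T → ℝ) (μ ν : Measure (Traj d T)) : ℝ≥0∞ :=
  ⨅ π ∈ BCpl μ ν, ∫⁻ q in {q : Traj d T × Traj d T | q.1 ≠ q.2},
    (ENNReal.ofReal (w q.1) + ENNReal.ofReal (w q.2)) ∂π

/-- `p`-th power of the adapted Wasserstein distance (cost `|x-y|_p^p`). -/
def AWpow (p : ℝ) {d T : ℕ} (μ ν : Measure (Traj d T)) : ℝ≥0∞ :=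
  ⨅ π ∈ BCpl μ ν, ∫⁻ q, ENNReal.ofReal (∑ i, ∑ j, |q.1 i j - q.2 i j| ^ p) ∂π

/-- The weight `w_p(x) = 1 + |x|_p^p`. -/
def wp (p : ℝ) {d T : ℕ} (x : Traj d T) : ℝ := 1 + ∑ i, ∑ j, |x i j| ^ p

section OffDiagonal

variable {α β : Type*} [MeasurableSpace α] [MeasurableSpace β]

/-- The first marginal of the part of `π` that lives off the diagonal: the mass that the transport
plan `π` removes from its first marginal. -/
def offDiagFst (π : Measure (α × α)) : Measure α := (π.restrict (Set.diagonal α)ᶜ).fst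

/-- The second marginal of the part of `π` that lives off the diagonal: the mass that the transport
plan `π` adds to its second marginal. -/
def offDiagSnd (π : Measure (α × α)) : Measure α := (π.restrict (Set.diagonal α)ᶜ).snd

instance (π : Measure (α × α)) [IsFiniteMeasure π] : IsFiniteMeasure (offDiagFst π) :=
  inferInstanceAs (IsFiniteMeasure (π.restrict _).fst)

instance (π : Measure (α × α)) [IsFiniteMeasure π] : IsFiniteMeasure (offDiagSnd π) :=
  inferInstanceAs (IsFiniteMeasure (π.restrict _).snd)

lemma offDiagSnd_apply (π : Measure (α × α)) {s : Set α} (hs : MeasurableSet s) :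
    offDiagSnd π s = π (Prod.snd ⁻¹' s ∩ (Set.diagonal α)ᶜ) := by
  rw [offDiagSnd, Measure.snd_apply hs, Measure.restrict_apply (measurable_snd hs)]

lemma offDiagSnd_le_snd (π : Measure (α × α)) : offDiagSnd π ≤ π.snd :=
  Measure.map_mono Measure.restrict_le_self measurable_snd

lemma offDiagFst_of_subsingleton [Subsingleton α] (π : Measure (α × α)) : offDiagFst π = 0 := by
  simp [offDiagFst, Set.diagonal_eq_univ]

lemma offDiagSnd_of_subsingleton [Subsingleton α] (π : Measure (α × α)) : offDiagSnd π = 0 := by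
  simp [offDiagSnd, Set.diagonal_eq_univ]

lemma lintegral_compl_diagonal (π : Measure (α × α)) {w : α → ℝ≥0∞} (hw : Measurable w) :
    ∫⁻ q in (Set.diagonal α)ᶜ, (w q.1 + w q.2) ∂π
      = ∫⁻ x, w x ∂offDiagFst π + ∫⁻ x, w x ∂offDiagSnd π := by
  rw [offDiagFst, offDiagSnd, Measure.fst, Measure.snd, lintegral_map hw measurable_fst,
    lintegral_map hw measurable_snd]
  exact lintegral_add_left (hw.comp measurable_fst) _

lemma offDiagSnd_add (π γ : Measure (α × α)) :
    offDiagSnd (π + γ) = offDiagSnd π + offDiagSnd γ := by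
  rw [offDiagSnd, Measure.restrict_add, Measure.snd_add, offDiagSnd, offDiagSnd]

lemma fst_map_prodMap (π : Measure (α × α)) {f : α → β} (hf : Measurable f) :
    (π.map (Prod.map f f)).fst = π.fst.map f := by
  rw [Measure.fst, Measure.fst, Measure.map_map measurable_fst (hf.prodMap hf),
    Measure.map_map hf measurable_fst]
  rfl

lemma snd_map_prodMap (π : Measure (α × α)) {f : α → β} (hf : Measurable f) :
    (π.map (Prod.map f f)).snd = π.snd.map f := by
  rw [Measure.snd, Measure.snd, Measure.map_map measurable_snd (hf.prodMap hf),
    Measure.map_map hf measurable_snd]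
  rfl

section Map

variable [MeasurableEq β] (π : Measure (α × α)) {f : α → β} (hf : Measurable f)
include hf

lemma restrict_compl_diagonal_map_le :
    (π.map (Prod.map f f)).restrict (Set.diagonal β)ᶜ
      ≤ (π.restrict (Set.diagonal α)ᶜ).map (Prod.map f f) := by
  rw [Measure.restrict_map (hf.prodMap hf) measurableSet_diagonal.compl]
  refine Measure.map_mono (Measure.restrict_mono_set _ fun q hq hne => hq ?_) (hf.prodMap hf)
  exact congrArg f hne

lemma offDiagSnd_map_le : offDiagSnd (π.map (Prod.map f f)) ≤ (offDiagSnd π).map f :=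
  (Measure.map_mono (restrict_compl_diagonal_map_le π hf) measurable_snd).trans_eq
    (snd_map_prodMap _ hf)

end Map

lemma lintegral_compl_diagonal_map_le (π : Measure (α × α)) [MeasurableEq β] {f : α → β}
    (hf : Measurable f) {v : β → ℝ≥0∞} (hv : Measurable v) {w : α → ℝ≥0∞}
    (hvw : ∀ x, v (f x) ≤ w x) :
    ∫⁻ q in (Set.diagonal β)ᶜ, (v q.1 + v q.2) ∂π.map (Prod.map f f)
      ≤ ∫⁻ q in (Set.diagonal α)ᶜ, (w q.1 + w q.2) ∂π := by
  refine (lintegral_mono' (restrict_compl_diagonal_map_le π hf) le_rfl).trans ?_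
  rw [lintegral_map (by fun_prop) (hf.prodMap hf)]
  exact lintegral_mono fun q => add_le_add (hvw q.1) (hvw q.2)

variable [MeasurableEq α]

lemma offDiagSnd_map_diag (μ : Measure α) : offDiagSnd (μ.map Function.diag) = 0 := by
  rw [offDiagSnd, Measure.restrict_map measurable_diag measurableSet_diagonal.compl]
  simp [Set.preimage, Function.diag]

lemma lintegral_offDiagSnd_map_prodMk (P : Measure β) {X Y : β → α} (hX : Measurable X)
    (hY : Measurable Y) {f : α → ℝ≥0∞} (hf : Measurable f) :
    ∫⁻ y, f y ∂offDiagSnd (P.map fun z => (X z, Y z)) = ∫⁻ z in {z | X z ≠ Y z}, f (Y z) ∂P := by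
  have hXY : Measurable fun z => (X z, Y z) := hX.prodMk hY
  rw [offDiagSnd, Measure.snd, lintegral_map hf measurable_snd,
    Measure.restrict_map hXY measurableSet_diagonal.compl]
  exact lintegral_map (hf.comp measurable_snd) hXY

lemma fst_add_offDiagSnd (π : Measure (α × α)) : π.fst + offDiagSnd π = π.snd + offDiagFst π := by
  have hdiag : (π.restrict (Set.diagonal α)).fst = (π.restrict (Set.diagonal α)).snd := by
    refine Measure.map_congr ?_
    filter_upwards [ae_restrict_mem measurableSet_diagonal] with q hq using hq
  have hfst : π.fst = (π.restrict (Set.diagonal α)).fst + offDiagFst π := by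
    rw [offDiagFst, ← Measure.fst_add, Measure.restrict_add_restrict_compl measurableSet_diagonal]
  have hsnd : π.snd = (π.restrict (Set.diagonal α)).snd + offDiagSnd π := by
    rw [offDiagSnd, ← Measure.snd_add, Measure.restrict_add_restrict_compl measurableSet_diagonal]
  rw [hfst, hsnd, hdiag, add_right_comm]

/-- The net transport `offDiagSnd π - offDiagFst π` depends on the marginals only; both sides are
rearranged so that no subtraction of measures occurs. -/
lemma offDiagFst_add_offDiagSnd_comm {π γ : Measure (α × α)} [IsFiniteMeasure γ]
    (hfst : π.fst = γ.fst) (hsnd : π.snd = γ.snd) :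
    offDiagFst π + offDiagSnd γ = offDiagSnd π + offDiagFst γ := by
  rw [← Measure.add_right_inj (γ.fst + γ.snd)]
  calc (γ.fst + γ.snd) + (offDiagFst π + offDiagSnd γ)
      = (π.snd + offDiagFst π) + (γ.fst + offDiagSnd γ) := by rw [hsnd]; abel
    _ = (π.fst + offDiagSnd π) + (γ.snd + offDiagFst γ) := by simp only [fst_add_offDiagSnd]
    _ = (γ.fst + γ.snd) + (offDiagSnd π + offDiagFst γ) := by rw [hfst]; abel

/-- The net transport of `π` and `γ` being the same, any excess in the mass added by `π` is matched
by an equal excess in the mass removed, hence the factor `2`. -/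
lemma lintegral_compl_diagonal_le_of_lintegral_offDiagSnd_le {π γ : Measure (α × α)}
    [IsFiniteMeasure γ] (hfst : π.fst = γ.fst) (hsnd : π.snd = γ.snd)
    {w : α → ℝ≥0∞} (hw : Measurable w) {c : ℝ≥0∞}
    (h : ∫⁻ x, w x ∂offDiagSnd π
      ≤ ∫⁻ x, w x ∂offDiagSnd γ + c * ∫⁻ q in (Set.diagonal α)ᶜ, (w q.1 + w q.2) ∂γ) :
    ∫⁻ q in (Set.diagonal α)ᶜ, (w q.1 + w q.2) ∂π
      ≤ (1 + 2 * c) * ∫⁻ q in (Set.diagonal α)ᶜ, (w q.1 + w q.2) ∂γ := by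
  set V := ∫⁻ q in (Set.diagonal α)ᶜ, (w q.1 + w q.2) ∂γ with hV
  rw [lintegral_compl_diagonal γ hw] at hV
  rcases eq_or_ne V ∞ with hVtop | hVtop
  · rw [hVtop, ENNReal.mul_top (by simp)]
    exact le_top
  have hγ : ∫⁻ x, w x ∂offDiagSnd γ ≠ ∞ := ne_top_of_le_ne_top hVtop (hV ▸ le_add_self)
  have hcomm := congrArg (fun τ => ∫⁻ x, w x ∂τ) (offDiagFst_add_offDiagSnd_comm hfst hsnd)
  simp only [lintegral_add_measure] at hcomm
  have h_fst : ∫⁻ x, w x ∂offDiagFst π ≤ ∫⁻ x, w x ∂offDiagFst γ + c * V := by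
    rw [← ENNReal.add_le_add_iff_right hγ, hcomm]
    exact (add_le_add_left h _).trans_eq (by ring)
  calc ∫⁻ q in (Set.diagonal α)ᶜ, (w q.1 + w q.2) ∂π
      = ∫⁻ x, w x ∂offDiagFst π + ∫⁻ x, w x ∂offDiagSnd π := lintegral_compl_diagonal π hw
    _ ≤ (∫⁻ x, w x ∂offDiagFst γ + c * V) + (∫⁻ x, w x ∂offDiagSnd γ + c * V) :=
      add_le_add h_fst h
    _ = (1 + 2 * c) * V := by
      rw [add_add_add_comm, ← hV]
      ring

instance [MeasurableEq β] : MeasurableEq (α × β) where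
  measurableSet_diagonal := by
    have h : Set.diagonal (α × β)
        = {q | q.1.1 = q.2.1} ∩ {q | q.1.2 = q.2.2} := by
      ext q
      simp [Prod.ext_iff]
    rw [h]
    exact (measurableSet_eq_fun (by fun_prop) (by fun_prop)).inter
      (measurableSet_eq_fun (by fun_prop) (by fun_prop))

end OffDiagonal

section MaximalCoupling

variable {α E : Type*} [MeasurableSpace α] [MeasurableSpace E]

lemma mutuallySingular_withDensity_tsub (m : Measure E) {f g : E → ℝ≥0∞} (hf : Measurable f)
    (hg : Measurable g) : m.withDensity (f - g) ⟂ₘ m.withDensity (g - f) := by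
  have hs : MeasurableSet {x | f x ≤ g x} := measurableSet_le hf hg
  refine ⟨_, hs, ?_, ?_⟩
  · rw [withDensity_apply _ hs]
    exact setLIntegral_eq_zero hs fun x hx => tsub_eq_zero_of_le hx
  · rw [withDensity_apply _ hs.compl]
    exact setLIntegral_eq_zero hs.compl fun x hx => tsub_eq_zero_of_le (le_of_not_ge hx)

lemma exists_kernel_eq_add_mutuallySingular [MeasurableSpace.CountableOrCountablyGenerated α E]
    (κ η : Kernel α E) [IsFiniteKernel κ] [IsFiniteKernel η] :
    ∃ L A B : Kernel α E, κ = L + A ∧ η = L + B ∧ ∀ x, A x ⟂ₘ B x := by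
  have hf := Kernel.measurable_rnDeriv κ (κ + η)
  have hg := Kernel.measurable_rnDeriv η (κ + η)
  set f := κ.rnDeriv (κ + η)
  set g := η.rnDeriv (κ + η)
  refine ⟨(κ + η).withDensity (f ⊓ g), (κ + η).withDensity (f - g), (κ + η).withDensity (g - f),
    ?_, ?_, fun x => ?_⟩
  · have hfg : f ⊓ g + (f - g) = f := by
      ext x u
      exact (add_comm _ _).trans tsub_add_min
    rw [← Kernel.withDensity_add_right (hf.min hg) (hf.sub hg), hfg]
    ext1 x
    exact (Kernel.withDensity_rnDeriv_eq
      (Measure.absolutelyContinuous_of_le (Measure.le_add_right le_rfl))).symm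
  · have hgf : f ⊓ g + (g - f) = g := by
      ext x u
      rw [inf_comm]
      exact (add_comm _ _).trans tsub_add_min
    rw [← Kernel.withDensity_add_right (hf.min hg) (hg.sub hf), hgf]
    ext1 x
    exact (Kernel.withDensity_rnDeriv_eq
      (Measure.absolutelyContinuous_of_le (Measure.le_add_left le_rfl))).symm
  · rw [Kernel.withDensity_apply _ (hf.sub hg), Kernel.withDensity_apply _ (hg.sub hf)]
    exact mutuallySingular_withDensity_tsub _ (hf.comp measurable_prodMk_left)
      (hg.comp measurable_prodMk_left)

lemma le_of_le_add_of_mutuallySingular {A B τ : Measure E} (hAB : A ⟂ₘ B) (h : B ≤ A + τ) :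
    B ≤ τ := by
  obtain ⟨s, -, hAs, hBs⟩ := hAB
  refine Measure.le_intro fun t _ _ => ?_
  calc B t ≤ B (t ∩ s) + B sᶜ :=
        (measure_mono fun x hx => by by_cases hxs : x ∈ s <;> simp [hx, hxs]).trans
          (measure_union_le _ _)
    _ ≤ A (t ∩ s) + τ (t ∩ s) := by simpa [hBs] using h (t ∩ s)
    _ ≤ τ t := by
      rw [measure_mono_null Set.inter_subset_right hAs, zero_add]
      exact measure_mono Set.inter_subset_left

lemma fst_inv_smul_prod {A B : Measure E} [IsFiniteMeasure A] [IsFiniteMeasure B]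
    (h : A Set.univ = B Set.univ) : ((A Set.univ)⁻¹ • A.prod B).fst = A := by
  rcases eq_or_ne A 0 with rfl | hA
  · simp
  · rw [Measure.fst, Measure.map_smul, Measure.map_fst_prod, ← h, smul_smul,
      ENNReal.inv_mul_cancel (by simpa using hA) (measure_ne_top _ _), one_smul]

lemma snd_inv_smul_prod {A B : Measure E} [IsFiniteMeasure A] [IsFiniteMeasure B]
    (h : A Set.univ = B Set.univ) : ((A Set.univ)⁻¹ • A.prod B).snd = B := by
  rw [h, Measure.snd, ← Measure.prod_swap, ← Measure.map_smul,
    Measure.map_map measurable_snd measurable_swap]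
  exact fst_inv_smul_prod h.symm

/-- The coupling of `L x + A x` and `L x + B x` that keeps the common part `L x` on the diagonal and
couples the residuals `A x` and `B x`, which should have equal mass, independently. -/
def maxCoupling (L A B : Kernel α E) : Kernel α (E × E) :=
  L.map Function.diag + (A ×ₖ B).withDensity fun x _ => (A x Set.univ)⁻¹

section

variable {L A B : Kernel α E} [IsFiniteKernel A] [IsFiniteKernel B]

lemma maxCoupling_apply (x : α) :
    maxCoupling L A B x = (L x).map Function.diag + (A x Set.univ)⁻¹ • (A x).prod (B x) := by
  have hA : Measurable (Function.uncurry fun x (_ : E × E) => (A x Set.univ)⁻¹) :=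
    ((A.measurable_coe .univ).comp measurable_fst).inv
  rw [maxCoupling, add_apply, Kernel.map_apply _ measurable_diag,
    Kernel.withDensity_apply _ hA, withDensity_const, Kernel.prod_apply]

lemma fst_maxCoupling (hAB : ∀ x, A x Set.univ = B x Set.univ) :
    (maxCoupling L A B).fst = L + A := by
  ext1 x
  rw [Kernel.fst_apply, maxCoupling_apply, ← Measure.fst, Measure.fst_add,
    Measure.fst, Measure.map_map measurable_fst measurable_diag, fst_inv_smul_prod (hAB x)]
  exact congrArg (· + _) Measure.map_id

lemma snd_maxCoupling (hAB : ∀ x, A x Set.univ = B x Set.univ) :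
    (maxCoupling L A B).snd = L + B := by
  ext1 x
  rw [Kernel.snd_apply, maxCoupling_apply, ← Measure.snd, Measure.snd_add,
    Measure.snd, Measure.map_map measurable_snd measurable_diag, snd_inv_smul_prod (hAB x)]
  exact congrArg (· + _) Measure.map_id

lemma offDiagSnd_maxCoupling_le [MeasurableEq E] (hAB : ∀ x, A x Set.univ = B x Set.univ) (x : α) :
    offDiagSnd (maxCoupling L A B x) ≤ B x := by
  rw [maxCoupling_apply, offDiagSnd_add, offDiagSnd_map_diag, zero_add]
  exact (offDiagSnd_le_snd _).trans_eq (snd_inv_smul_prod (hAB x))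

end

/-- Mutual singularity of the residuals makes the kernel `B` of off-diagonal mass minimal. -/
lemma exists_maximal_coupling_kernel [MeasurableSpace.CountableOrCountablyGenerated α E]
    [MeasurableEq E] (κ η : Kernel α E) [IsMarkovKernel κ] [IsMarkovKernel η] :
    ∃ (J : Kernel α (E × E)) (B : Kernel α E), J.fst = κ ∧ J.snd = η ∧ IsFiniteKernel B ∧
      (∀ x, offDiagSnd (J x) ≤ B x) ∧
      ∀ (μ : Measure α) [IsFiniteMeasure μ] (τ : Measure (α × E)),
        μ ⊗ₘ η ≤ μ ⊗ₘ κ + τ → μ ⊗ₘ B ≤ τ := by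
  obtain ⟨L, A, B, hκ, hη, hAB⟩ := exists_kernel_eq_add_mutuallySingular κ η
  have hL : IsFiniteKernel L := isFiniteKernel_of_le (ν := κ) fun x => by
    rw [hκ]
    exact Measure.le_add_right le_rfl
  have hA : IsFiniteKernel A := isFiniteKernel_of_le (ν := κ) fun x => by
    rw [hκ]
    exact Measure.le_add_left le_rfl
  have hB : IsFiniteKernel B := isFiniteKernel_of_le (ν := η) fun x => by
    rw [hη]
    exact Measure.le_add_left le_rfl
  have hmass x : A x Set.univ = B x Set.univ := by
    have h : κ x Set.univ = η x Set.univ := by simp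
    simpa only [hκ, hη, add_apply, Measure.add_apply,
      ENNReal.add_right_inj (measure_ne_top (L x) _)] using h
  refine ⟨maxCoupling L A B, B, hκ ▸ fst_maxCoupling hmass, hη ▸ snd_maxCoupling hmass, hB,
    offDiagSnd_maxCoupling_le hmass, fun μ _ τ h => ?_⟩
  rw [hκ, hη, Measure.compProd_add_right, Measure.compProd_add_right, add_assoc] at h
  exact le_of_le_add_of_mutuallySingular (.compProd_of_right μ μ (.of_forall hAB))
    (Measure.le_of_add_le_add_left h)

end MaximalCoupling

section OneStep

variable {α E Z : Type*} [MeasurableSpace α] [MeasurableSpace E] [MeasurableSpace Z]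

lemma isMarkovKernel_of_fst {K : Kernel Z (α × E)} (hK : IsMarkovKernel K.fst) :
    IsMarkovKernel K :=
  ⟨fun z => ⟨by rw [← Measure.fst_univ, Measure.fst, ← Kernel.fst_apply, measure_univ]⟩⟩

lemma exists_kernel_glue_of_eq [MeasurableEq α] (J : Kernel α (E × E)) [IsMarkovKernel J]
    {X Y : Z → α} (hX : Measurable X) (hY : Measurable Y) :
    ∃ K : Kernel Z (E × E), K.fst = J.fst.comap X hX ∧ K.snd = J.snd.comap Y hY ∧
      ∀ z, X z = Y z → K z = J (X z) := by
  classical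
  refine ⟨Kernel.piecewise (measurableSet_eq_fun hX hY) (J.comap X hX)
    (J.fst.comap X hX ×ₖ J.snd.comap Y hY), ?_, ?_, fun z hz => if_pos hz⟩
  · ext1 z
    rw [Kernel.fst_apply, Kernel.piecewise_apply, Kernel.comap_apply]
    split_ifs
    · rw [Kernel.comap_apply, Kernel.fst_apply]
    · rw [← Kernel.fst_apply, Kernel.fst_prod, Kernel.comap_apply]
  · ext1 z
    rw [Kernel.snd_apply, Kernel.piecewise_apply, Kernel.comap_apply]
    split_ifs with hz
    · rw [Kernel.comap_apply, Kernel.snd_apply, show X z = Y z from hz]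
    · rw [← Kernel.snd_apply, Kernel.snd_prod, Kernel.comap_apply]

lemma offDiagSnd_map_compProd_le [MeasurableEq α] [MeasurableEq E] (P : Measure Z)
    [IsFiniteMeasure P] {X Y : Z → α} (hX : Measurable X) (hY : Measurable Y)
    {K : Kernel Z (E × E)} [IsMarkovKernel K] {η B : Kernel α E} [IsSFiniteKernel η]
    [IsSFiniteKernel B] (hη : K.snd = η.comap Y hY)
    (hB : ∀ z, X z = Y z → offDiagSnd (K z) ≤ B (X z)) :
    offDiagSnd ((P ⊗ₘ K).map fun q => ((X q.1, q.2.1), (Y q.1, q.2.2)))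
      ≤ offDiagSnd (P.map fun z => (X z, Y z)) ⊗ₘ η + P.map X ⊗ₘ B := by
  have hstep : Measurable fun q : Z × E × E => ((X q.1, q.2.1), (Y q.1, q.2.2)) := by fun_prop
  refine Measure.le_intro fun s hs _ => ?_
  have hsη : Measurable fun y => η y (Prod.mk y ⁻¹' s) := Kernel.measurable_kernel_prodMk_left hs
  have hsB : Measurable fun y => B y (Prod.mk y ⁻¹' s) := Kernel.measurable_kernel_prodMk_left hs
  have hne : MeasurableSet {z | X z ≠ Y z} := (measurableSet_eq_fun hX hY).compl
  have hpointwise (z : Z) : K z {r | (Y z, r.2) ∈ s ∧ (X z, r.1) ≠ (Y z, r.2)}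
      ≤ {z | X z ≠ Y z}.indicator (fun z => η (Y z) (Prod.mk (Y z) ⁻¹' s)) z
        + B (X z) (Prod.mk (X z) ⁻¹' s) := by
    by_cases hz : X z = Y z
    · refine le_add_left (le_trans ?_ (hB z hz _))
      rw [offDiagSnd_apply _ (measurable_prodMk_left hs)]
      exact measure_mono fun r hr => ⟨by simpa [hz] using hr.1, by simpa [hz] using hr.2⟩
    · refine le_add_right ?_
      rw [Set.indicator_of_mem (s := {z | X z ≠ Y z}) hz, ← Kernel.comap_apply η hY, ← hη,
        Kernel.snd_apply' _ _ (measurable_prodMk_left hs)]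
      exact measure_mono fun r hr => hr.1
  calc offDiagSnd ((P ⊗ₘ K).map fun q => ((X q.1, q.2.1), (Y q.1, q.2.2))) s
      = ∫⁻ z, K z {r | (Y z, r.2) ∈ s ∧ (X z, r.1) ≠ (Y z, r.2)} ∂P := by
        have hs' := (measurable_snd hs).inter (measurableSet_diagonal (α := α × E)).compl
        rw [offDiagSnd_apply _ hs, Measure.map_apply hstep hs', Measure.compProd_apply (hstep hs')]
        rfl
    _ ≤ ∫⁻ z, ({z | X z ≠ Y z}.indicator (fun z => η (Y z) (Prod.mk (Y z) ⁻¹' s)) z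
          + B (X z) (Prod.mk (X z) ⁻¹' s)) ∂P := lintegral_mono hpointwise
    _ = ∫⁻ y, η y (Prod.mk y ⁻¹' s) ∂offDiagSnd (P.map fun z => (X z, Y z))
          + ∫⁻ x, B x (Prod.mk x ⁻¹' s) ∂P.map X := by
        rw [lintegral_offDiagSnd_map_prodMk P hX hY hsη, lintegral_map hsB hX,
          ← lintegral_indicator hne]
        exact lintegral_add_right _ (hsB.comp hX)
    _ = _ := by rw [Measure.add_apply, Measure.compProd_apply hs, Measure.compProd_apply hs]

lemma compProd_residual_le [MeasurableEq α] [MeasurableEq E] {κ η B : Kernel α E}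
    [IsMarkovKernel κ] [IsMarkovKernel η] {μ ν : Measure α} [IsFiniteMeasure μ] [IsFiniteMeasure ν]
    (hB : ∀ τ : Measure (α × E), μ ⊗ₘ η ≤ μ ⊗ₘ κ + τ → μ ⊗ₘ B ≤ τ)
    {γ : Measure ((α × E) × (α × E))} [IsFiniteMeasure γ] (hfst : γ.fst = μ ⊗ₘ κ)
    (hsnd : γ.snd = ν ⊗ₘ η) :
    μ ⊗ₘ B ≤ offDiagFst (γ.map (Prod.map Prod.fst Prod.fst)) ⊗ₘ η + offDiagSnd γ := by
  set γ' := γ.map (Prod.map Prod.fst Prod.fst)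
  have hprod : Measurable (Prod.map Prod.fst Prod.fst : (α × E) × (α × E) → α × α) := by fun_prop
  have hμ : γ'.fst = μ := by
    rw [← Measure.fst_compProd μ κ, ← hfst, Measure.fst, Measure.map_map measurable_fst hprod,
      Measure.fst, Measure.fst, Measure.map_map measurable_fst measurable_fst]
    rfl
  have hν : γ'.snd = ν := by
    rw [← Measure.fst_compProd ν η, ← hsnd, Measure.snd, Measure.map_map measurable_snd hprod,
      Measure.fst, Measure.snd, Measure.map_map measurable_fst measurable_snd]
    rfl
  refine hB _ ?_
  calc μ ⊗ₘ η ≤ (μ + offDiagSnd γ') ⊗ₘ η := by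
        rw [Measure.compProd_add_left]
        exact Measure.le_add_right le_rfl
    _ = offDiagFst γ' ⊗ₘ η + γ.snd := by
        rw [hsnd, ← Measure.compProd_add_left, ← hμ, fst_add_offDiagSnd, hν, add_comm]
    _ ≤ offDiagFst γ' ⊗ₘ η + (γ.fst + offDiagSnd γ) := by
        rw [fst_add_offDiagSnd]
        exact add_le_add_right (Measure.le_add_right le_rfl) _
    _ = μ ⊗ₘ κ + (offDiagFst γ' ⊗ₘ η + offDiagSnd γ) := by
        rw [hfst]
        abel

/-- Couple the next states maximally while the two processes agree, and independently once they
have separated. -/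
lemma exists_kernel_offDiagSnd_map_compProd_le [MeasurableEq α] [MeasurableEq E]
    [MeasurableSpace.CountableOrCountablyGenerated α E] (κ η : Kernel α E) [IsMarkovKernel κ]
    [IsMarkovKernel η] {X Y : Z → α} (hX : Measurable X) (hY : Measurable Y) :
    ∃ K : Kernel Z (E × E), IsMarkovKernel K ∧ K.fst = κ.comap X hX ∧ K.snd = η.comap Y hY ∧
      ∀ (P : Measure Z) [IsFiniteMeasure P] (γ : Measure ((α × E) × (α × E))) [IsFiniteMeasure γ],
        γ.fst = P.map X ⊗ₘ κ → γ.snd = P.map Y ⊗ₘ η →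
        offDiagSnd ((P ⊗ₘ K).map fun q => ((X q.1, q.2.1), (Y q.1, q.2.2)))
          ≤ (offDiagSnd (P.map fun z => (X z, Y z))
              + offDiagFst (γ.map (Prod.map Prod.fst Prod.fst))) ⊗ₘ η + offDiagSnd γ := by
  obtain ⟨J, B, hJκ, hJη, hBfin, hJB, hBmin⟩ := exists_maximal_coupling_kernel κ η
  have hJ : IsMarkovKernel J := isMarkovKernel_of_fst (hJκ ▸ inferInstance)
  obtain ⟨K, hKκ, hKη, hKJ⟩ := exists_kernel_glue_of_eq J hX hY
  rw [hJκ] at hKκ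
  rw [hJη] at hKη
  have hK : IsMarkovKernel K := isMarkovKernel_of_fst (hKκ ▸ inferInstance)
  refine ⟨K, hK, hKκ, hKη, fun P _ γ _ hfst hsnd => ?_⟩
  refine (offDiagSnd_map_compProd_le P hX hY hKη fun z hz => hKJ z hz ▸ hJB (X z)).trans ?_
  rw [Measure.compProd_add_left, add_assoc]
  exact add_le_add_right (compProd_residual_le (fun τ => hBmin _ τ) hfst hsnd) _

end OneStep

section PathLaw

variable {α β γ δ E F : Type*} [MeasurableSpace α] [MeasurableSpace β] [MeasurableSpace γ]
  [MeasurableSpace δ] [MeasurableSpace E] [MeasurableSpace F]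

lemma map_prodMap_compProd {μ : Measure α} [SFinite μ] {K : Kernel α γ} [IsSFiniteKernel K]
    {κ : Kernel β δ} [IsSFiniteKernel κ] {g : α → β} (hg : Measurable g) {f : γ → δ}
    (hf : Measurable f) (hK : K.map f = κ.comap g hg) :
    (μ ⊗ₘ K).map (Prod.map g f) = μ.map g ⊗ₘ κ := by
  ext s hs
  rw [Measure.map_apply (hg.prodMap hf) hs, Measure.compProd_apply (hg.prodMap hf hs),
    Measure.compProd_apply hs, lintegral_map (Kernel.measurable_kernel_prodMk_left hs) hg]
  refine lintegral_congr fun x => ?_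
  rw [← Kernel.comap_apply κ hg, ← hK, Kernel.map_apply' _ hf _ (measurable_prodMk_left hs)]
  rfl

/-- Appending one more state to a path of length `t`, as a measurable equivalence. -/
def snocMeasurableEquiv (E : Type*) [MeasurableSpace E] (t : ℕ) :
    (Fin t → E) × E ≃ᵐ (Fin (t + 1) → E) where
  toFun q := Fin.snoc q.1 q.2
  invFun x := (Fin.init x, x (Fin.last t))
  left_inv q := by simp
  right_inv x := by simp
  measurable_toFun := by
    refine measurable_pi_lambda _ fun i => ?_
    cases i using Fin.lastCases with
    | last => simpa using measurable_snd
    | cast i => simpa [Function.comp_def] using (measurable_pi_apply i).comp measurable_fst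
  measurable_invFun :=
    (measurable_pi_lambda _ fun i => measurable_pi_apply i.castSucc).prodMk (measurable_pi_apply _)

/-- The law of the first `t` states of the process with transition kernels `κ`; the kernel `κ t`
gives the law of the next state conditionally on the first `t` ones. -/
def pathLaw (κ : ∀ t, Kernel (Fin t → E) E) : ∀ t, Measure (Fin t → E)
  | 0 => Measure.dirac Fin.elim0
  | t + 1 => (pathLaw κ t ⊗ₘ κ t).map (snocMeasurableEquiv E t)

lemma measurable_take {t n : ℕ} (h : t ≤ n) :
    Measurable (Fin.take t h : (Fin n → E) → (Fin t → E)) :=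
  measurable_pi_lambda _ fun _ => measurable_pi_apply _

lemma take_snocMeasurableEquiv {t n : ℕ} (h : t ≤ n) (q : (Fin n → E) × E) :
    Fin.take t (h.trans (Nat.le_succ n)) (snocMeasurableEquiv E n q) = Fin.take t h q.1 :=
  congrArg (Fin.take t h) (Fin.init_snoc (α := fun _ => E) q.2 q.1)

lemma measurable_comp_path {f : E → F} (hf : Measurable f) (n : ℕ) :
    Measurable fun x : Fin n → E => f ∘ x :=
  measurable_pi_lambda _ fun i => hf.comp (measurable_pi_apply i)

variable {κ : ∀ t, Kernel (Fin t → E) E}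

lemma pathLaw_succ_map_symm (t : ℕ) :
    (pathLaw κ (t + 1)).map (snocMeasurableEquiv E t).symm = pathLaw κ t ⊗ₘ κ t :=
  MeasurableEquiv.map_symm_map _

lemma map_take_eq_pathLaw {n : ℕ} {μ : Measure (Fin n → E)} [IsProbabilityMeasure μ]
    (hκ : ∀ t (h : t + 1 ≤ n), μ.map (Fin.take (t + 1) h)
      = (μ.map (Fin.take t (Nat.le_of_succ_le h)) ⊗ₘ κ t).map (snocMeasurableEquiv E t))
    {t : ℕ} (h : t ≤ n) : μ.map (Fin.take t h) = pathLaw κ t := by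
  induction t with
  | zero =>
    have hconst : (Fin.take 0 h : (Fin n → E) → Fin 0 → E) = fun _ => Fin.elim0 :=
      funext fun _ => Subsingleton.elim _ _
    rw [hconst, Measure.map_const, measure_univ, one_smul]
    rfl
  | succ t ih => rw [hκ t h, ih, pathLaw]

lemma exists_eq_pathLaw [StandardBorelSpace E] [Nonempty E] {n : ℕ} (μ : Measure (Fin n → E))
    [IsProbabilityMeasure μ] :
    ∃ κ : ∀ t, Kernel (Fin t → E) E, (∀ t, IsMarkovKernel (κ t)) ∧ μ = pathLaw κ n := by
  have hstep (t : ℕ) : ∃ k : Kernel (Fin t → E) E, IsMarkovKernel k ∧ ∀ h : t + 1 ≤ n,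
      μ.map (Fin.take (t + 1) h)
        = (μ.map (Fin.take t (Nat.le_of_succ_le h)) ⊗ₘ k).map (snocMeasurableEquiv E t) := by
    by_cases h : t + 1 ≤ n
    · set ρ := (μ.map (Fin.take (t + 1) h)).map (snocMeasurableEquiv E t).symm with hρ
      have hfst : ρ.fst = μ.map (Fin.take t (Nat.le_of_succ_le h)) := by
        rw [hρ, Measure.fst, Measure.map_map measurable_fst (MeasurableEquiv.measurable _),
          Measure.map_map (measurable_fst.comp (MeasurableEquiv.measurable _)) (measurable_take h)]
        rfl
      have : IsFiniteMeasure ρ := inferInstanceAs (IsFiniteMeasure (Measure.map _ _))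
      refine ⟨ρ.condKernel, inferInstance, fun _ => ?_⟩
      rw [← hfst, ρ.disintegrate, hρ, MeasurableEquiv.map_map_symm]
    · exact ⟨Kernel.const _ (Measure.dirac (Classical.arbitrary E)), inferInstance,
        fun h' => absurd h' h⟩
  choose κ hκ hμκ using hstep
  refine ⟨κ, hκ, ?_⟩
  rw [← map_take_eq_pathLaw hμκ le_rfl]
  exact Measure.map_id.symm

variable [∀ t, IsMarkovKernel (κ t)]

instance (t : ℕ) : IsProbabilityMeasure (pathLaw κ t) := by
  induction t with
  | zero => exact Measure.dirac.isProbabilityMeasure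
  | succ t ih =>
    exact Measure.isProbabilityMeasure_map (snocMeasurableEquiv E t).measurable.aemeasurable

lemma pathLaw_map_take {t n : ℕ} (h : t ≤ n) : (pathLaw κ n).map (Fin.take t h) = pathLaw κ t := by
  induction n, h using Nat.le_induction with
  | base => exact Measure.map_id
  | succ n h ih =>
    rw [← ih, ← Measure.fst_compProd (pathLaw κ n) (κ n), ← pathLaw_succ_map_symm, Measure.fst,
      Measure.map_map measurable_fst (MeasurableEquiv.measurable _),
      Measure.map_map (measurable_take h) (measurable_fst.comp (MeasurableEquiv.measurable _))]
    rfl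

lemma pathLaw_map_comp {K : ∀ t, Kernel (Fin t → F) F} [∀ t, IsMarkovKernel (K t)] {f : F → E}
    (hf : Measurable f)
    (hK : ∀ t, (K t).map f = (κ t).comap (f ∘ ·) (measurable_comp_path hf t)) (t : ℕ) :
    (pathLaw K t).map (f ∘ ·) = pathLaw κ t := by
  induction t with
  | zero =>
    rw [pathLaw, Measure.map_dirac' (measurable_comp_path hf 0)]
    exact congrArg Measure.dirac (Subsingleton.elim _ _)
  | succ t ih =>
    have hsnoc : (f ∘ ·) ∘ snocMeasurableEquiv F t
        = snocMeasurableEquiv E t ∘ Prod.map (f ∘ ·) f := by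
      funext q
      exact Fin.comp_snoc f q.1 q.2
    rw [pathLaw, pathLaw,
      Measure.map_map (measurable_comp_path hf _) (MeasurableEquiv.measurable _), hsnoc,
      ← Measure.map_map (MeasurableEquiv.measurable _)
        ((measurable_comp_path hf t).prodMap hf),
      map_prodMap_compProd (measurable_comp_path hf t) hf (hK t), ih]

lemma exists_kernel_pathLaw_map {K : ∀ t, Kernel (Fin t → F) F} [∀ t, IsMarkovKernel (K t)]
    {f : F → E} (hf : Measurable f)
    (hK : ∀ t, (K t).map f = (κ t).comap (f ∘ ·) (measurable_comp_path hf t))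
    {t n : ℕ} (h : t ≤ n) :
    ∃ q : Kernel (Fin t → E) (Fin n → E), IsMarkovKernel q ∧
      (pathLaw K n).map (fun z => (Fin.take t h z, f ∘ z))
        = pathLaw K t ⊗ₘ q.comap (f ∘ ·) (measurable_comp_path hf t) := by
  have hfm (n : ℕ) := measurable_comp_path hf n
  induction n, h using Nat.le_induction with
  | base =>
    refine ⟨Kernel.id, inferInstance, ?_⟩
    rw [Kernel.id_comap, Measure.compProd_deterministic]
    simp only [Fin.take_eq_self]
  | succ n h ih =>
    obtain ⟨q, hq, hqn⟩ := ih
    refine ⟨(q ⊗ₖ (κ n).comap Prod.snd measurable_snd).map (snocMeasurableEquiv E n),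
      Kernel.IsMarkovKernel.map _ (MeasurableEquiv.measurable _), ?_⟩
    have hcond : (pathLaw K n ⊗ₘ K n).map (Prod.map (fun z => (Fin.take t h z, f ∘ z)) f)
        = (pathLaw K t ⊗ₘ q.comap (f ∘ ·) (hfm t)) ⊗ₘ (κ n).comap Prod.snd measurable_snd := by
      rw [← hqn]
      refine map_prodMap_compProd ((measurable_take h).prodMk (hfm n)) hf ?_
      rw [hK n]
      rfl
    have hsnoc : (fun z => (Fin.take t (h.trans (Nat.le_succ n)) z, f ∘ z)) ∘
          snocMeasurableEquiv F n
        = (Prod.map id (snocMeasurableEquiv E n) ∘ MeasurableEquiv.prodAssoc) ∘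
          Prod.map (fun z => (Fin.take t h z, f ∘ z)) f := by
      funext z
      exact Prod.ext (take_snocMeasurableEquiv h z) (Fin.comp_snoc f z.1 z.2)
    rw [pathLaw,
      Measure.map_map ((measurable_take _).prodMk (hfm _)) (MeasurableEquiv.measurable _), hsnoc,
      ← Measure.map_map (by fun_prop) (((measurable_take h).prodMk (hfm n)).prodMap hf), hcond,
      ← Measure.map_map (by fun_prop) (MeasurableEquiv.measurable _), Measure.compProd_assoc',
      ← Measure.compProd_map (MeasurableEquiv.measurable _),
      Kernel.comap_map_comm _ (hfm t) (MeasurableEquiv.measurable _)]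
    congr 2
    ext x s hs
    rw [Kernel.comap_apply, Kernel.compProd_apply hs, Kernel.compProd_apply hs]
    rfl

lemma condIndepFun_of_map_eq_compProd {Ω : Type*} [MeasurableSpace Ω] [StandardBorelSpace Ω]
    [StandardBorelSpace β] [Nonempty β] [StandardBorelSpace γ] [Nonempty γ] {P : Measure Ω}
    [IsFiniteMeasure P] {V : Ω → β} {W : Ω → γ} (hV : Measurable V) (hW : Measurable W)
    {a : β → α} (ha : Measurable a) {q : Kernel α γ} [IsMarkovKernel q]
    (h : P.map (fun ω => (V ω, W ω)) = P.map V ⊗ₘ q.comap a ha) :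
    V ⟂ᵢ[a ∘ V, ha.comp hV; P] W := by
  have hVW := hV.prodMk hW
  have hpair : P.map (fun ω => ((a (V ω), V ω), W ω))
      = P.map (fun ω => (a (V ω), V ω)) ⊗ₘ q.prodMkRight β := by
    have hg := ha.prodMk measurable_id
    have := map_prodMap_compProd (μ := P.map V) (K := q.comap a ha) (κ := q.prodMkRight β) hg
      measurable_id (Kernel.map_id _)
    rw [← h, Measure.map_map (hg.prodMap measurable_id) hVW, Measure.map_map hg hV] at this
    exact this
  have hsingle : P.map (fun ω => (a (V ω), W ω)) = P.map (a ∘ V) ⊗ₘ q := by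
    have := map_prodMap_compProd (μ := P.map V) (K := q.comap a ha) (κ := q) ha measurable_id
      (Kernel.map_id _)
    rw [← h, Measure.map_map (ha.prodMap measurable_id) hVW, Measure.map_map ha hV] at this
    exact this
  rw [condIndepFun_iff_condDistrib_prod_ae_eq_prodMkRight hW hV (ha.comp hV)]
  have h₁ := condDistrib_ae_eq_of_measure_eq_compProd (μ := P) _ hW.aemeasurable hpair
  have h₂ := condDistrib_ae_eq_of_measure_eq_compProd (μ := P) _ hW.aemeasurable hsingle
  rw [← Measure.fst_map_prodMk hV] at h₂
  filter_upwards [h₁, ae_of_ae_map measurable_fst.aemeasurable h₂] with x hx₁ hx₂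
  exact hx₁.trans hx₂.symm

end PathLaw

section PathCoupling

variable {E : Type*} [MeasurableSpace E]

/-- The joint law of the first `t` states of the two processes whose pair of states evolves
according to the transition kernels `K`, as a measure on pairs of paths. -/
def pathCoupling (K : ∀ t, Kernel (Fin t → E × E) (E × E)) (t : ℕ) :
    Measure ((Fin t → E) × (Fin t → E)) :=
  (pathLaw K t).map (MeasurableEquiv.arrowProdEquivProdArrow E E (Fin t))

lemma measurable_fst_comp_path (t : ℕ) : Measurable fun z : Fin t → E × E => Prod.fst ∘ z :=
  measurable_comp_path measurable_fst t

lemma measurable_snd_comp_path (t : ℕ) : Measurable fun z : Fin t → E × E => Prod.snd ∘ z :=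
  measurable_comp_path measurable_snd t

variable {K : ∀ t, Kernel (Fin t → E × E) (E × E)} {κ η : ∀ t, Kernel (Fin t → E) E}

lemma pathCoupling_succ (t : ℕ) : pathCoupling K (t + 1)
    = ((pathLaw K t ⊗ₘ K t).map fun q => ((Prod.fst ∘ q.1, q.2.1), (Prod.snd ∘ q.1, q.2.2))).map
        (Prod.map (snocMeasurableEquiv E t) (snocMeasurableEquiv E t)) := by
  have hstep : Measurable fun q : (Fin t → E × E) × (E × E) =>
      ((Prod.fst ∘ q.1, q.2.1), (Prod.snd ∘ q.1, q.2.2)) :=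
    (((measurable_fst_comp_path t).comp measurable_fst).prodMk (by fun_prop)).prodMk
      (((measurable_snd_comp_path t).comp measurable_fst).prodMk (by fun_prop))
  rw [pathCoupling, pathLaw, Measure.map_map (MeasurableEquiv.measurable _)
    (MeasurableEquiv.measurable _), Measure.map_map (by fun_prop) hstep]
  congr 1
  funext q
  exact Prod.ext (Fin.comp_snoc Prod.fst q.1 q.2) (Fin.comp_snoc Prod.snd q.1 q.2)

variable [∀ t, IsMarkovKernel (K t)] [∀ t, IsMarkovKernel (κ t)] [∀ t, IsMarkovKernel (η t)]

instance (t : ℕ) : IsProbabilityMeasure (pathCoupling K t) :=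
  Measure.isProbabilityMeasure_map (MeasurableEquiv.measurable _).aemeasurable

lemma fst_pathCoupling
    (hK : ∀ t, (K t).fst = (κ t).comap (Prod.fst ∘ ·) (measurable_fst_comp_path t)) (t : ℕ) :
    (pathCoupling K t).fst = pathLaw κ t := by
  simp only [Kernel.fst_eq] at hK
  rw [← pathLaw_map_comp measurable_fst hK, pathCoupling, Measure.fst,
    Measure.map_map measurable_fst (MeasurableEquiv.measurable _)]
  rfl

lemma snd_pathCoupling
    (hK : ∀ t, (K t).snd = (κ t).comap (Prod.snd ∘ ·) (measurable_snd_comp_path t)) (t : ℕ) :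
    (pathCoupling K t).snd = pathLaw κ t := by
  simp only [Kernel.snd_eq] at hK
  rw [← pathLaw_map_comp measurable_snd hK, pathCoupling, Measure.snd,
    Measure.map_map measurable_snd (MeasurableEquiv.measurable _)]
  rfl

lemma condIndepFun_take_pathCoupling [StandardBorelSpace E] [Nonempty E] {f : E × E → E}
    (hf : Measurable f)
    (hK : ∀ t, (K t).map f = (κ t).comap (f ∘ ·) (measurable_comp_path hf t)) {t n : ℕ}
    (h : t ≤ n) :
    let e := MeasurableEquiv.arrowProdEquivProdArrow E E (Fin n)
    (fun ω => Fin.take t h (e.symm ω)) ⟂ᵢ[fun ω => f ∘ Fin.take t h (e.symm ω),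
      (measurable_comp_path hf t).comp ((measurable_take h).comp e.symm.measurable);
      pathCoupling K n] fun ω => f ∘ e.symm ω := by
  intro e
  obtain ⟨q, hq, hqn⟩ := exists_kernel_pathLaw_map hf hK h
  have hV := (measurable_take (E := E × E) h).comp e.symm.measurable
  have hW := (measurable_comp_path hf n).comp e.symm.measurable
  refine condIndepFun_of_map_eq_compProd hV hW (measurable_comp_path hf t) (q := q) ?_
  rw [pathCoupling, Measure.map_map (hV.prodMk hW) (MeasurableEquiv.measurable _),
    Measure.map_map hV (MeasurableEquiv.measurable _)]
  exact hqn.trans (congrArg (· ⊗ₘ _) (pathLaw_map_take h).symm)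

lemma pathCoupling_mem_BCpl {d T : ℕ} {κ η : ∀ t, Kernel (Traj d t) (Fin d → ℝ)}
    [∀ t, IsMarkovKernel (κ t)] [∀ t, IsMarkovKernel (η t)]
    {K : ∀ t, Kernel (Fin t → (Fin d → ℝ) × (Fin d → ℝ)) ((Fin d → ℝ) × (Fin d → ℝ))}
    [∀ t, IsMarkovKernel (K t)]
    (hfst : ∀ t, (K t).fst = (κ t).comap (Prod.fst ∘ ·) (measurable_fst_comp_path t))
    (hsnd : ∀ t, (K t).snd = (η t).comap (Prod.snd ∘ ·) (measurable_snd_comp_path t)) :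
    pathCoupling K T ∈ BCpl (pathLaw κ T) (pathLaw η T) := by
  refine ⟨⟨inferInstance, fst_pathCoupling hfst T, snd_pathCoupling hsnd T⟩, inferInstance,
    fun t _ h => ⟨?_, ?_⟩⟩
  · simp only [Kernel.fst_eq] at hfst
    exact (condIndepFun_take_pathCoupling measurable_fst hfst (Nat.le_of_succ_le h)).comp
      (measurable_snd_comp_path t) measurable_id
  · simp only [Kernel.snd_eq] at hsnd
    exact (condIndepFun_take_pathCoupling measurable_snd hsnd (Nat.le_of_succ_le h)).comp
      (measurable_fst_comp_path t) measurable_id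

variable (K κ η) in
/-- Under the coupling with transition kernels `K`, the mass of `η` that separates at time `t + 1`
is at most the mass that has separated earlier, propagated by `η`, plus the mass that separates
under any competing coupling `γ` of the two path laws. -/
def HasSeparationBound : Prop :=
  ∀ (t : ℕ) (γ : Measure ((Fin (t + 1) → E) × (Fin (t + 1) → E))) [IsFiniteMeasure γ],
    γ.fst = pathLaw κ (t + 1) → γ.snd = pathLaw η (t + 1) →
    offDiagSnd (pathCoupling K (t + 1))
      ≤ ((offDiagSnd (pathCoupling K t) + offDiagFst (γ.map (Prod.map Fin.init Fin.init))) ⊗ₘ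
          η t).map (snocMeasurableEquiv E t) + offDiagSnd γ

variable (κ η) in
lemma exists_hasSeparationBound [StandardBorelSpace E] :
    ∃ K : ∀ t, Kernel (Fin t → E × E) (E × E), (∀ t, IsMarkovKernel (K t)) ∧
      (∀ t, (K t).fst = (κ t).comap (Prod.fst ∘ ·) (measurable_fst_comp_path t)) ∧
      (∀ t, (K t).snd = (η t).comap (Prod.snd ∘ ·) (measurable_snd_comp_path t)) ∧
      HasSeparationBound K κ η := by
  choose K hK hfst hsnd hstep using fun t => exists_kernel_offDiagSnd_map_compProd_le (κ t) (η t)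
    (measurable_fst_comp_path t) (measurable_snd_comp_path t)
  refine ⟨K, hK, hfst, hsnd, fun t γ _ hγκ hγη => ?_⟩
  simp only [Kernel.fst_eq, Kernel.snd_eq] at hfst hsnd
  set e := snocMeasurableEquiv E t
  have hsymm := e.symm.measurable
  have hγ₁ : (γ.map (Prod.map e.symm e.symm)).fst
      = (pathLaw K t).map (Prod.fst ∘ ·) ⊗ₘ κ t := by
    rw [fst_map_prodMap γ hsymm, hγκ, pathLaw_succ_map_symm, pathLaw_map_comp measurable_fst hfst]
  have hγ₂ : (γ.map (Prod.map e.symm e.symm)).snd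
      = (pathLaw K t).map (Prod.snd ∘ ·) ⊗ₘ η t := by
    rw [snd_map_prodMap γ hsymm, hγη, pathLaw_succ_map_symm, pathLaw_map_comp measurable_snd hsnd]
  have hγ_init : (γ.map (Prod.map e.symm e.symm)).map (Prod.map Prod.fst Prod.fst)
      = γ.map (Prod.map Fin.init Fin.init) :=
    Measure.map_map (measurable_fst.prodMap measurable_fst) (hsymm.prodMap hsymm)
  have hbound := hstep t (pathLaw K t) (γ.map (Prod.map e.symm e.symm)) hγ₁ hγ₂
  rw [hγ_init] at hbound
  calc offDiagSnd (pathCoupling K (t + 1))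
      ≤ _ := by
        rw [pathCoupling_succ]
        exact (offDiagSnd_map_le _ e.measurable).trans (Measure.map_mono hbound e.measurable)
    _ = ((offDiagSnd (pathCoupling K t)
          + offDiagFst (γ.map (Prod.map Fin.init Fin.init))) ⊗ₘ η t).map e
        + (offDiagSnd (γ.map (Prod.map e.symm e.symm))).map e := Measure.map_add _ _ e.measurable
    _ ≤ _ := by
        gcongr
        exact (Measure.map_mono (offDiagSnd_map_le _ hsymm) e.measurable).trans_eq
          e.map_map_symm

end PathCoupling

section WeightGrowth

lemma sum_prod_Icc_succ {R : Type*} [CommSemiring R] (C : ℕ → R) {t : ℕ} (ht : 1 ≤ t) :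
    ∑ r ∈ Finset.Icc 1 t, ∏ s ∈ Finset.Icc (r + 1) (t + 1), C s
      = C (t + 1) * (1 + ∑ r ∈ Finset.Icc 1 (t - 1), ∏ s ∈ Finset.Icc (r + 1) t, C s) := by
  obtain ⟨k, rfl⟩ := Nat.exists_eq_add_of_le' ht
  rw [Finset.sum_Icc_succ_top (by lia), Nat.add_sub_cancel, mul_add, Finset.mul_sum, mul_one,
    Finset.Icc_self, Finset.prod_singleton, add_comm]
  congr 1
  refine Finset.sum_congr rfl fun r hr => ?_
  rw [Finset.prod_Icc_succ_top (by have := Finset.mem_Icc.1 hr; lia), mul_comm]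

variable {E : Type*} [MeasurableSpace E]

lemma lintegral_map_snoc_compProd_le {t : ℕ} (P : Measure (Fin t → E)) [SFinite P]
    {κ : Kernel (Fin t → E) E} [IsSFiniteKernel κ] {v : (Fin (t + 1) → E) → ℝ≥0∞}
    (hv : Measurable v) {w : (Fin t → E) → ℝ≥0∞} (hw : Measurable w) {c : ℝ≥0∞}
    (h : ∀ x, ∫⁻ u, v (Fin.snoc x u) ∂κ x ≤ c * w x) :
    ∫⁻ x, v x ∂(P ⊗ₘ κ).map (snocMeasurableEquiv E t) ≤ c * ∫⁻ x, w x ∂P := by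
  rw [lintegral_map_equiv, Measure.lintegral_compProd (by fun_prop), ← lintegral_const_mul _ hw]
  exact lintegral_mono h

lemma lintegral_offDiagSnd_pathCoupling_le [StandardBorelSpace E]
    {K : ∀ t, Kernel (Fin t → E × E) (E × E)} {κ η : ∀ t, Kernel (Fin t → E) E}
    [∀ t, IsMarkovKernel (K t)] [∀ t, IsMarkovKernel (κ t)] [∀ t, IsMarkovKernel (η t)]
    (hK : HasSeparationBound K κ η) {T : ℕ} {W : ∀ t, (Fin t → E) → ℝ≥0∞} {C : ℕ → ℝ≥0∞}
    (hW : ∀ t, Measurable (W t)) (hW_init : ∀ t x, W t (Fin.init x) ≤ W (t + 1) x)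
    (hWη : ∀ t, 1 ≤ t → t < T → ∀ x,
      ∫⁻ u, W (t + 1) (Fin.snoc x u) ∂η t x ≤ C (t + 1) * W t x)
    {γ : Measure ((Fin T → E) × (Fin T → E))} [IsFiniteMeasure γ] (hγκ : γ.fst = pathLaw κ T)
    (hγη : γ.snd = pathLaw η T) :
    ∫⁻ x, W T x ∂offDiagSnd (pathCoupling K T)
      ≤ ∫⁻ x, W T x ∂offDiagSnd γ
        + (∑ r ∈ Finset.Icc 1 (T - 1), ∏ s ∈ Finset.Icc (r + 1) T, C s)
          * ∫⁻ q in (Set.diagonal (Fin T → E))ᶜ, (W T q.1 + W T q.2) ∂γ := by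
  induction T with
  | zero => simp [offDiagSnd_of_subsingleton]
  | succ t ih =>
    have hstep := (lintegral_mono' (hK t γ hγκ hγη) (le_refl (W (t + 1)))).trans_eq
      (lintegral_add_measure _ _ _)
    rcases t.eq_zero_or_pos with rfl | ht
    · simpa [offDiagSnd_of_subsingleton, offDiagFst_of_subsingleton] using hstep
    have h_init : Measurable (Fin.init : (Fin (t + 1) → E) → Fin t → E) :=
      measurable_take (Nat.le_succ t)
    set γ' := γ.map (Prod.map Fin.init Fin.init)
    have hγ'κ : γ'.fst = pathLaw κ t := by
      rw [fst_map_prodMap γ h_init, hγκ]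
      exact pathLaw_map_take (Nat.le_succ t)
    have hγ'η : γ'.snd = pathLaw η t := by
      rw [snd_map_prodMap γ h_init, hγη]
      exact pathLaw_map_take (Nat.le_succ t)
    set S := ∑ r ∈ Finset.Icc 1 (t - 1), ∏ s ∈ Finset.Icc (r + 1) t, C s with hS
    set V' := ∫⁻ q in (Set.diagonal (Fin t → E))ᶜ, (W t q.1 + W t q.2) ∂γ' with hV'
    have hV'V : V' ≤ _ := lintegral_compl_diagonal_map_le γ h_init (hW t) (hW_init t)
    have hprev := ih (fun s hs hst => hWη s hs (hst.trans t.lt_succ_self)) hγ'κ hγ'η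
    refine (hstep.trans_eq (add_comm _ _)).trans (add_le_add_right ?_ _)
    rw [show t + 1 - 1 = t from rfl, sum_prod_Icc_succ C ht, ← hS]
    calc _ ≤ C (t + 1) * ∫⁻ x, W t x ∂(offDiagSnd (pathCoupling K t) + offDiagFst γ') :=
          lintegral_map_snoc_compProd_le _ (hW (t + 1)) (hW t) (hWη t ht t.lt_succ_self)
      _ ≤ C (t + 1) * ((∫⁻ x, W t x ∂offDiagSnd γ' + S * V') + ∫⁻ x, W t x ∂offDiagFst γ') := by
          rw [lintegral_add_measure]
          gcongr
      _ = C (t + 1) * (1 + S) * V' := by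
          rw [hV', lintegral_compl_diagonal γ' (hW t)]
          ring
      _ ≤ _ := by gcongr

lemma ATVw_le_mul_TVw {d T : ℕ} {μ ν : Measure (Traj d T)} [IsProbabilityMeasure μ]
    {η : ∀ t, Kernel (Traj d t) (Fin d → ℝ)} [∀ t, IsMarkovKernel (η t)] (hν : ν = pathLaw η T)
    {w : ∀ t, Traj d t → ℝ} (hw : ∀ t, Measurable (w t))
    (hw_init : ∀ t x, w t (Fin.init x) ≤ w (t + 1) x) {C : ℕ → NNReal}
    (hwη : ∀ t, 1 ≤ t → t < T → ∀ x,
      ∫⁻ u, ENNReal.ofReal (w (t + 1) (Fin.snoc x u)) ∂η t x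
        ≤ C (t + 1) * ENNReal.ofReal (w t x)) :
    ATVw (w T) μ ν
      ≤ (1 + 2 * ∑ r ∈ Finset.Icc 1 (T - 1), ∏ s ∈ Finset.Icc (r + 1) T, C s : NNReal)
        * TVw (w T) μ ν := by
  obtain ⟨κ, hκ, hμ⟩ := exists_eq_pathLaw μ
  obtain ⟨K, hK, hfst, hsnd, hbound⟩ := exists_hasSeparationBound κ η
  have hW (t : ℕ) : Measurable fun x => ENNReal.ofReal (w t x) := (hw t).ennreal_ofReal
  subst hμ hν
  rw [TVw]
  set c : NNReal := 1 + 2 * ∑ r ∈ Finset.Icc 1 (T - 1), ∏ s ∈ Finset.Icc (r + 1) T, C s with hc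
  have hc0 : (c : ℝ≥0∞) ≠ 0 := ENNReal.coe_ne_zero.2 (add_pos_of_pos_of_nonneg one_pos zero_le).ne'
  simp only [ENNReal.mul_iInf_of_ne hc0 ENNReal.coe_ne_top]
  refine le_iInf₂ fun γ ⟨_, hγκ, hγη⟩ => (iInf₂_le _ (pathCoupling_mem_BCpl hfst hsnd)).trans ?_
  push_cast [hc]
  exact lintegral_compl_diagonal_le_of_lintegral_offDiagSnd_le
    ((fst_pathCoupling hfst T).trans hγκ.symm) ((snd_pathCoupling hsnd T).trans hγη.symm) (hW T)
    (lintegral_offDiagSnd_pathCoupling_le hbound hW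
      (fun t x => ENNReal.ofReal_le_ofReal (hw_init t x)) hwη hγκ hγη)

end WeightGrowth

section Modification

lemma exists_kernel_ae_eq_forall_lintegral_le {α β : Type*} [MeasurableSpace α] [MeasurableSpace β]
    {μ : Measure α} (κ : Kernel α β) [IsMarkovKernel κ] {f : β → ℝ≥0∞} (hf : Measurable f) {b : β}
    (hb : f b = 0) {g : α → ℝ≥0∞} (hg : Measurable g) (h : ∀ᵐ x ∂μ, ∫⁻ y, f y ∂κ x ≤ g x) :
    ∃ η : Kernel α β, IsMarkovKernel η ∧ η =ᵐ[μ] κ ∧ ∀ x, ∫⁻ y, f y ∂η x ≤ g x := by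
  classical
  have hs : MeasurableSet {x | ∫⁻ y, f y ∂κ x ≤ g x} := measurableSet_le hf.lintegral_kernel hg
  refine ⟨Kernel.piecewise hs κ (Kernel.const α (Measure.dirac b)), inferInstance, ?_, fun x => ?_⟩
  · filter_upwards [h] with x hx
    exact if_pos hx
  · rw [Kernel.piecewise_apply]
    split_ifs with hx
    · exact hx
    · rw [Kernel.const_apply, lintegral_dirac' b hf, hb]
      exact zero_le

variable {E : Type*} [MeasurableSpace E]

lemma bind_map_snoc {t : ℕ} (μ : Measure (Fin t → E)) [SFinite μ] (κ : Kernel (Fin t → E) E)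
    [IsMarkovKernel κ] :
    μ.bind (fun x => (κ x).map (Fin.snoc x)) = (μ ⊗ₘ κ).map (snocMeasurableEquiv E t) := by
  rw [Measure.compProd_eq_comp_prod, Measure.map_comp _ _ (MeasurableEquiv.measurable _)]
  congr 1
  funext x
  rw [Kernel.map_apply _ (MeasurableEquiv.measurable _), Kernel.prod_apply, Kernel.id_apply,
    Measure.dirac_prod, Measure.map_map (MeasurableEquiv.measurable _) (by fun_prop)]
  rfl

lemma exists_eq_pathLaw_forall_lintegral_le {n : ℕ} {μ : Measure (Fin n → E)}
    [IsProbabilityMeasure μ] {κ : ∀ t, Kernel (Fin t → E) E} [∀ t, IsMarkovKernel (κ t)]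
    (hκ : ∀ t (h : t + 1 ≤ n), μ.map (Fin.take (t + 1) h)
      = (μ.map (Fin.take t (Nat.le_of_succ_le h)) ⊗ₘ κ t).map (snocMeasurableEquiv E t))
    {f : E → ℝ≥0∞} (hf : Measurable f) {b : E} (hb : f b = 0) {g : ∀ t, (Fin t → E) → ℝ≥0∞}
    (hg : ∀ t, Measurable (g t))
    (hfg : ∀ t, 1 ≤ t → ∀ h : t + 1 ≤ n, ∀ᵐ x ∂μ.map (Fin.take t (Nat.le_of_succ_le h)),
      ∫⁻ y, f y ∂κ t x ≤ g t x) :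
    ∃ η : ∀ t, Kernel (Fin t → E) E, (∀ t, IsMarkovKernel (η t)) ∧ μ = pathLaw η n ∧
      ∀ t, 1 ≤ t → t < n → ∀ x, ∫⁻ y, f y ∂η t x ≤ g t x := by
  have hstep (t : ℕ) : ∃ k : Kernel (Fin t → E) E, IsMarkovKernel k ∧
      (∀ h : t + 1 ≤ n, k =ᵐ[μ.map (Fin.take t (Nat.le_of_succ_le h))] κ t) ∧
      (1 ≤ t → t < n → ∀ x, ∫⁻ y, f y ∂k x ≤ g t x) := by
    by_cases ht : 1 ≤ t ∧ t < n
    · obtain ⟨k, hk, hkκ, hkg⟩ :=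
        exists_kernel_ae_eq_forall_lintegral_le (κ t) hf hb (hg t) (hfg t ht.1 ht.2)
      exact ⟨k, hk, fun _ => hkκ, fun _ _ => hkg⟩
    · exact ⟨κ t, inferInstance, fun _ => Filter.EventuallyEq.rfl, fun h₁ h₂ => absurd ⟨h₁, h₂⟩ ht⟩
  choose η hη hηκ hηg using hstep
  refine ⟨η, hη, ?_, hηg⟩
  rw [← map_take_eq_pathLaw (fun t h => (hκ t h).trans ?_) le_rfl]
  · exact Measure.map_id.symm
  · rw [Measure.compProd_congr (hηκ t h)]

end Modification

section Weight

variable {p : ℝ} {d T : ℕ}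

lemma wp_nonneg (x : Traj d T) : 0 ≤ wp p x := by
  unfold wp
  positivity

variable (p d T) in
lemma measurable_wp : Measurable (wp p : Traj d T → ℝ) := by
  unfold wp
  fun_prop

lemma wp_eq_wp_init_add (x : Traj d (T + 1)) :
    wp p x = wp p (Fin.init x) + ∑ j, |x (Fin.last T) j| ^ p := by
  simp only [wp, Fin.sum_univ_castSucc, add_assoc]
  rfl

lemma wp_init_le (x : Traj d (T + 1)) : wp p (Fin.init x) ≤ wp p x := by
  rw [wp_eq_wp_init_add]
  exact le_add_of_nonneg_right (by positivity)

lemma lintegral_wp_snoc_le {ρ : Measure (Fin d → ℝ)} [IsProbabilityMeasure ρ] {x : Traj d T}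
    {c : ℝ} (hc : 0 ≤ c)
    (h : ∫⁻ u, ENNReal.ofReal (∑ j, |u j| ^ p) ∂ρ ≤ ENNReal.ofReal (c * wp p x)) :
    ∫⁻ u, ENNReal.ofReal (wp p (Fin.snoc x u : Traj d (T + 1))) ∂ρ
      ≤ ENNReal.ofReal (1 + c) * ENNReal.ofReal (wp p x) := by
  calc ∫⁻ u, ENNReal.ofReal (wp p (Fin.snoc x u : Traj d (T + 1))) ∂ρ
      = ENNReal.ofReal (wp p x) + ∫⁻ u, ENNReal.ofReal (∑ j, |u j| ^ p) ∂ρ := by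
        have hsplit (u : Fin d → ℝ) : ENNReal.ofReal (wp p (Fin.snoc x u : Traj d (T + 1)))
            = ENNReal.ofReal (wp p x) + ENNReal.ofReal (∑ j, |u j| ^ p) := by
          rw [wp_eq_wp_init_add, ENNReal.ofReal_add (wp_nonneg _) (by positivity), Fin.init_snoc,
            Fin.snoc_last]
        simp only [hsplit]
        rw [lintegral_add_left measurable_const, lintegral_const, measure_univ, mul_one]
    _ ≤ ENNReal.ofReal (wp p x) + ENNReal.ofReal (c * wp p x) := by gcongr
    _ = ENNReal.ofReal (1 + c) * ENNReal.ofReal (wp p x) := by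
        rw [← ENNReal.ofReal_add (wp_nonneg x) (mul_nonneg hc (wp_nonneg x)),
          ← ENNReal.ofReal_mul (by positivity)]
        ring_nf

end Weight

section Bounds

variable {p : ℝ} {d T : ℕ}

lemma abs_sub_rpow_le (hp : 0 ≤ p) (a b : ℝ) : |a - b| ^ p ≤ 2 ^ p * (|a| ^ p + |b| ^ p) := by
  have hab : |a - b| ≤ 2 * max |a| |b| := by
    linarith [abs_sub a b, le_max_left |a| |b|, le_max_right |a| |b|]
  calc |a - b| ^ p ≤ (2 * max |a| |b|) ^ p := Real.rpow_le_rpow (abs_nonneg _) hab hp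
    _ = 2 ^ p * (max |a| |b|) ^ p := Real.mul_rpow zero_le_two (by positivity)
    _ ≤ 2 ^ p * (|a| ^ p + |b| ^ p) := by
      gcongr
      rcases max_choice |a| |b| with h | h <;> rw [h]
      · exact le_add_of_nonneg_right (by positivity)
      · exact le_add_of_nonneg_left (by positivity)

lemma sum_abs_sub_rpow_le (hp : 0 ≤ p) (x y : Traj d T) :
    ∑ i, ∑ j, |x i j - y i j| ^ p ≤ 2 ^ p * (wp p x + wp p y) := by
  calc ∑ i, ∑ j, |x i j - y i j| ^ p
      ≤ ∑ i, ∑ j, 2 ^ p * (|x i j| ^ p + |y i j| ^ p) :=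
        Finset.sum_le_sum fun i _ => Finset.sum_le_sum fun j _ => abs_sub_rpow_le hp _ _
    _ = 2 ^ p * (∑ i, ∑ j, |x i j| ^ p + ∑ i, ∑ j, |y i j| ^ p) := by
        simp only [← Finset.mul_sum, Finset.sum_add_distrib]
    _ ≤ 2 ^ p * (wp p x + wp p y) := by
        unfold wp
        gcongr <;> exact le_add_of_nonneg_left zero_le_one

lemma AWpow_le_mul_ATVw (hp : 0 < p) (μ ν : Measure (Traj d T)) :
    AWpow p μ ν ≤ ENNReal.ofReal (2 ^ p) * ATVw (wp p) μ ν := by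
  have h2 : ENNReal.ofReal ((2 : ℝ) ^ p) ≠ 0 := (ENNReal.ofReal_pos.2 (by positivity)).ne'
  have hoff : MeasurableSet (Set.diagonal (Traj d T))ᶜ := measurableSet_diagonal.compl
  rw [AWpow, ATVw]
  simp only [ENNReal.mul_iInf_of_ne h2 ENNReal.ofReal_ne_top]
  refine iInf₂_mono fun π _ => ?_
  rw [← lintegral_const_mul' _ _ ENNReal.ofReal_ne_top]
  refine (lintegral_mono fun q => ?_).trans_eq (lintegral_indicator hoff _)
  by_cases hq : q ∈ (Set.diagonal (Traj d T))ᶜ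
  · rw [Set.indicator_of_mem hq, ← ENNReal.ofReal_add (wp_nonneg _) (wp_nonneg _),
      ← ENNReal.ofReal_mul (by positivity)]
    exact ENNReal.ofReal_le_ofReal (sum_abs_sub_rpow_le hp.le _ _)
  · have heq : q.1 = q.2 := not_not.1 hq
    simp [heq, Real.zero_rpow hp.ne']

lemma toNNReal_one_add_two_mul_sum_prod {c : ℕ → ℝ} (hc : ∀ t, 2 ≤ t → t ≤ T → 0 ≤ c t) :
    (1 + 2 * ∑ t ∈ Finset.Icc 1 (T - 1), ∏ s ∈ Finset.Icc (t + 1) T, (1 + c s)).toNNReal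
      = 1 + 2 * ∑ t ∈ Finset.Icc 1 (T - 1),
          ∏ s ∈ Finset.Icc (t + 1) T, (1 + c s).toNNReal := by
  have hfactor (t) (ht : t ∈ Finset.Icc 1 (T - 1)) : ∀ s ∈ Finset.Icc (t + 1) T, 0 ≤ 1 + c s := by
    intro s hs
    rw [Finset.mem_Icc] at ht hs
    exact add_nonneg zero_le_one (hc s (by lia) hs.2)
  have hprod (t) (ht : t ∈ Finset.Icc 1 (T - 1)) : 0 ≤ ∏ s ∈ Finset.Icc (t + 1) T, (1 + c s) :=
    Finset.prod_nonneg (hfactor t ht)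
  rw [Real.toNNReal_add zero_le_one (mul_nonneg zero_le_two (Finset.sum_nonneg hprod)),
    Real.toNNReal_mul zero_le_two, Real.toNNReal_sum_of_nonneg hprod, Real.toNNReal_one,
    Real.toNNReal_ofNat, Finset.sum_congr rfl fun t ht =>
      Real.toNNReal_prod_of_nonneg (hfactor t ht)]

lemma exists_eq_pathLaw_forall_lintegral_wp_snoc_le (hp : 0 < p) {ν : Measure (Traj d T)}
    [IsProbabilityMeasure ν] {c : ℕ → ℝ} (hc : ∀ t, 2 ≤ t → t ≤ T → 0 ≤ c t)
    {κ : ∀ t, Traj d t → Measure (Fin d → ℝ)} (hκm : ∀ t, Measurable (κ t))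
    (hκp : ∀ t x, IsProbabilityMeasure (κ t x))
    (hκν : ∀ t, ∀ h : t + 1 ≤ T, ν.map (restr d h) =
      (ν.map (restr d (Nat.le_of_succ_le h))).bind (fun x => (κ t x).map (Fin.snoc x)))
    (hκc : ∀ t, 1 ≤ t → ∀ h : t + 1 ≤ T, ∀ᵐ y ∂(ν.map (restr d (Nat.le_of_succ_le h))),
      ∫⁻ z, ENNReal.ofReal (∑ j, |z j| ^ p) ∂(κ t y) ≤ ENNReal.ofReal (c (t + 1) * wp p y)) :
    ∃ η : ∀ t, Kernel (Traj d t) (Fin d → ℝ), (∀ t, IsMarkovKernel (η t)) ∧ ν = pathLaw η T ∧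
      ∀ t, 1 ≤ t → t < T → ∀ x,
        ∫⁻ u, ENNReal.ofReal (wp p (Fin.snoc x u : Traj d (t + 1))) ∂η t x
          ≤ ENNReal.ofReal (1 + c (t + 1)) * ENNReal.ofReal (wp p x) := by
  let k (t : ℕ) : Kernel (Traj d t) (Fin d → ℝ) := ⟨κ t, hκm t⟩
  have hk (t : ℕ) : IsMarkovKernel (k t) := ⟨hκp t⟩
  obtain ⟨η, hη, hν, hηc⟩ := exists_eq_pathLaw_forall_lintegral_le (κ := k)
    (fun t h => (hκν t h).trans (bind_map_snoc _ (k t)))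
    (f := fun z => ENNReal.ofReal (∑ j, |z j| ^ p)) (by fun_prop) (b := 0)
    (by simp [Real.zero_rpow hp.ne'])
    (fun t => ((measurable_wp p d t).const_mul (c (t + 1))).ennreal_ofReal) hκc
  exact ⟨η, hη, hν, fun t ht htT x =>
    lintegral_wp_snoc_le (hc (t + 1) (by lia) htT) (hηc t ht htT x)⟩

end Bounds

theorem aw_le_atv_p_general {d T : ℕ} {p : ℝ} (hp : 0 < p) (μ ν : Measure (Traj d T))
    [IsProbabilityMeasure μ] [IsProbabilityMeasure ν] :
    AWpow p μ ν ≤ ENNReal.ofReal ((2 : ℝ) ^ p) * ATVw (wp p) μ ν ∧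
    (∀ (c : ℕ → ℝ), (∀ t, 2 ≤ t → t ≤ T → 0 ≤ c t) →
      ∀ (κ : ∀ t : ℕ, Traj d t → Measure (Fin d → ℝ)),
        (∀ t, Measurable (κ t)) → (∀ t x, IsProbabilityMeasure (κ t x)) →
        (∀ t, ∀ h : t + 1 ≤ T,
          ν.map (restr d h) =
            (ν.map (restr d (Nat.le_of_succ_le h))).bind (fun x => (κ t x).map (Fin.snoc x))) →
        (∀ t, 1 ≤ t → ∀ h : t + 1 ≤ T,
          ∀ᵐ y ∂(ν.map (restr d (Nat.le_of_succ_le h))),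
            (∫⁻ z, ENNReal.ofReal (∑ j, |z j| ^ p) ∂(κ t y))
              ≤ ENNReal.ofReal (c (t + 1) * (1 + ∑ i, ∑ j, |y i j| ^ p))) →
      AWpow p μ ν ≤
        ENNReal.ofReal ((2 : ℝ) ^ p *
            (1 + 2 * ∑ t ∈ Finset.Icc 1 (T - 1), ∏ s ∈ Finset.Icc (t + 1) T, (1 + c s)))
          * TVw (wp p) μ ν) := by
  refine ⟨AWpow_le_mul_ATVw hp μ ν, fun c hc κ hκm hκp hκν hκc => ?_⟩
  obtain ⟨η, hη, hν, hηc⟩ :=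
    exists_eq_pathLaw_forall_lintegral_wp_snoc_le hp hc hκm hκp hκν hκc
  have hTV := ATVw_le_mul_TVw (μ := μ) hν (measurable_wp p d) (fun _ => wp_init_le)
    (C := fun s => (1 + c s).toNNReal) hηc
  rw [ENNReal.ofReal_mul (by positivity), mul_assoc]
  refine (AWpow_le_mul_ATVw hp μ ν).trans (mul_le_mul_right (hTV.trans_eq ?_) _)
  rw [← toNNReal_one_add_two_mul_sum_prod hc, ENNReal.ofReal]

/-- `AW_p^p(μ,ν) ≤ 2^p ATV_p^p(μ,ν)`; and under the conditional moment
assumption, `AW_p^p(μ,ν) ≤ 2^p (1 + 2 ∑_{t=1}^{T-1} ∏_{s=t+1}^{T}(1+c_s)) TV_p^p(μ,ν)`. -/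
theorem aw_le_atv_p (d T : ℕ) (hd : 1 ≤ d) (hT : 1 ≤ T) (p : ℝ) (hp : 1 ≤ p)
    (μ ν : Measure (Traj d T)) [IsProbabilityMeasure μ] [IsProbabilityMeasure ν]
    (hμmom : (∫⁻ x, ENNReal.ofReal (∑ i, ∑ j, |x i j| ^ p) ∂μ) < ⊤)
    (hνmom : (∫⁻ x, ENNReal.ofReal (∑ i, ∑ j, |x i j| ^ p) ∂ν) < ⊤) :
    AWpow p μ ν ≤ ENNReal.ofReal ((2 : ℝ) ^ p) * ATVw (wp p) μ ν ∧
    (∀ (c : ℕ → ℝ), (∀ t, 2 ≤ t → t ≤ T → 0 ≤ c t) →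
      ∀ (κ : ∀ t : ℕ, Traj d t → Measure (Fin d → ℝ)),
        (∀ t, Measurable (κ t)) → (∀ t x, IsProbabilityMeasure (κ t x)) →
        (∀ t, ∀ h : t + 1 ≤ T,
          ν.map (restr d h) =
            (ν.map (restr d (Nat.le_of_succ_le h))).bind (fun x => (κ t x).map (Fin.snoc x))) →
        (∀ t, 1 ≤ t → ∀ h : t + 1 ≤ T,
          ∀ᵐ y ∂(ν.map (restr d (Nat.le_of_succ_le h))),
            (∫⁻ z, ENNReal.ofReal (∑ j, |z j| ^ p) ∂(κ t y))
              ≤ ENNReal.ofReal (c (t + 1) * (1 + ∑ i, ∑ j, |y i j| ^ p))) →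
      AWpow p μ ν ≤
        ENNReal.ofReal ((2 : ℝ) ^ p *
            (1 + 2 * ∑ t ∈ Finset.Icc 1 (T - 1), ∏ s ∈ Finset.Icc (t + 1) T, (1 + c s)))
          * TVw (wp p) μ ν) := by
  exact aw_le_atv_p_general (zero_lt_one.trans_le hp) μ ν

end
end

section
/- Let p ≥ 1 and let 𝒦 ⊆ ℝ^{dT} be a Borel set with finite diameter D := sup_{x,y ∈ 𝒦} (|x − y|_p^p)^{1/p} with respect to the metric (x, y) ↦ (|x − y|_p^p)^{1/p}. If μ, ν are Borel probability measures concentrated on 𝒦, then AW_p(μ, ν)^p ≤ D^p · ATV(μ, ν) ≤ (2T − 1) · D^p · TV(μ, ν). -/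
open MeasureTheory ProbabilityTheory
open scoped ENNReal

noncomputable section

/-!
Let `γ` couple `μ` and `ν`, let `δ = γ(X ≠ Y)` and let `c ≤ μ, ν` be the law of the common path on
the event `X = Y`, so that `c` has mass `1 - δ`. On the `s`-th σ-algebra of the filtration, `c` has
densities `f s ≤ 1` with respect to `μ` and `f' s ≤ 1` with respect to `ν`. At time `s + 1`, keep
matched only the part of `μ` with density `f (s + 1) * ∏ i ≤ s, min (f i) (f' i)`, and similarly
for `ν`. These parts are adapted, decrease in `s`, and have the same law up to time `s + 1`. Mass
that stops being matched after time `s` is coupled conditionally independently given the past up to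
`s`, and mass matched up to the end is put on the diagonal. The sum of these pieces is bicausal: at
time `t`, the pieces settled before `t` are causal by construction, while all the others agree up to
time `t` and add up to a measure with adapted density.

By the Weierstrass inequality `1 ≤ ∏ k i + ∑ (1 - k i)`, each of the `T - 1` factors of the product
at time `T` costs at most `∫ (1 - f i) dc + ∫ (1 - f' i) dc ≤ 2 δ` of the mass of `c`. The diagonal
therefore retains mass at least `1 - δ - 2 (T - 1) δ`.
-/

lemma one_le_prod_add_sum_one_sub {ι : Type*} (s : Finset ι) {k : ι → ℝ≥0∞}
    (hk : ∀ i ∈ s, k i ≤ 1) : 1 ≤ ∏ i ∈ s, k i + ∑ i ∈ s, (1 - k i) := by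
  induction s using Finset.cons_induction with
  | empty => simp
  | cons j s hj ih =>
    rw [Finset.forall_mem_cons] at hk
    rw [Finset.prod_cons, Finset.sum_cons]
    set P := ∏ i ∈ s, k i
    have hP : P ≤ 1 := Finset.prod_le_one' hk.2
    calc 1 ≤ P + ∑ i ∈ s, (1 - k i) := ih hk.2
      _ = (k j + (1 - k j)) * P + ∑ i ∈ s, (1 - k i) := by
        rw [add_tsub_cancel_of_le hk.1, one_mul]
      _ ≤ k j * P + (1 - k j) + ∑ i ∈ s, (1 - k i) := by
        rw [add_mul]; gcongr; exact mul_le_of_le_one_right' hP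
      _ = _ := add_assoc _ _ _

lemma one_le_prod_min_add_sum_one_sub {ι : Type*} (s : Finset ι) {f g : ι → ℝ≥0∞}
    (hf : ∀ i ∈ s, f i ≤ 1) :
    1 ≤ ∏ i ∈ s, min (f i) (g i) + ∑ i ∈ s, ((1 - f i) + (1 - g i)) := by
  have hmin : ∀ i ∈ s, min (f i) (g i) ≤ 1 := fun i hi => (min_le_left _ _).trans (hf i hi)
  refine (one_le_prod_add_sum_one_sub s hmin).trans ?_
  gcongr with i
  obtain h | h := min_choice (f i) (g i) <;> rw [h]
  exacts [le_self_add, le_add_self]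

section Trim

variable {Ω : Type*} {m mΩ : MeasurableSpace Ω} {μ ν : Measure Ω}

lemma lintegral_eq_of_trim_eq (hm : m ≤ mΩ) (h : μ.trim hm = ν.trim hm) {f : Ω → ℝ≥0∞}
    (hf : Measurable[m] f) : ∫⁻ x, f x ∂μ = ∫⁻ x, f x ∂ν := by
  rw [← lintegral_trim hm hf, h, lintegral_trim hm hf]

lemma exists_withDensity_trim_eq_of_le [IsFiniteMeasure μ] (hm : m ≤ mΩ) (h : ν ≤ μ) :
    ∃ f : Ω → ℝ≥0∞, Measurable[m] f ∧ f ≤ 1 ∧ (μ.withDensity f).trim hm = ν.trim hm := by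
  have : IsFiniteMeasure ν := isFiniteMeasure_of_le μ h
  have hle : ν.trim hm ≤ μ.trim hm := @Measure.le_intro _ m _ _ fun A hA _ => by
    simpa only [trim_measurableSet_eq hm hA] using h A
  set f := (ν.trim hm).rnDeriv (μ.trim hm)
  have hf : Measurable[m] f := Measure.measurable_rnDeriv _ _
  have hf1 : Measurable[m] fun x => min 1 (f x) := measurable_const.min hf
  refine ⟨fun x => min 1 (f x), hf1, fun x => min_le_left _ _, ?_⟩
  have hae : (fun x => min 1 (f x)) =ᵐ[μ.trim hm] f := by
    filter_upwards [Measure.rnDeriv_le_one_of_le hle] with x hx using min_eq_right hx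
  rw [trim_withDensity hm hf1, withDensity_congr_ae hae,
    Measure.withDensity_rnDeriv_eq _ _ hle.absolutelyContinuous]

lemma trim_restrict_eq_trim_withDensity_condExpKernel [StandardBorelSpace Ω] [IsFiniteMeasure μ]
    (hm : m ≤ mΩ) {B : Set Ω} (hB : MeasurableSet B) :
    (μ.restrict B).trim hm = (μ.withDensity fun x => condExpKernel μ m x B).trim hm := by
  refine @Measure.ext _ m _ _ fun A hA => ?_
  have hκ : Measurable[m] fun x => condExpKernel μ m x B := measurable_condExpKernel hB
  have hdiag : @Measurable _ _ mΩ (m.prod mΩ) (Function.diag : Ω → Ω × Ω) :=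
    (measurable_id'' hm).prodMk measurable_id
  rw [trim_measurableSet_eq hm hA, trim_measurableSet_eq hm hA, withDensity_apply _ (hm A hA),
    ← setLIntegral_trim hm hκ hA, ← Measure.compProd_apply_prod hA hB,
    compProd_trim_condExpKernel hm, @Measure.map_apply _ _ mΩ (m.prod mΩ) _ _ hdiag _ (hA.prod hB),
    Measure.restrict_apply (hm A hA)]
  rfl

end Trim

section Causality

variable {α β : Type*}

/-- Causality of `π` along the pair of σ-algebras `m`, `m'`: the conditional law on `m'` of the
second coordinate given the first one depends on the first one through `m` only. The conditional
probability of an event `B` of `m'` is encoded as a density `g` with respect to a reference measure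
`μ`, so that the notion also applies to a part `π` of a coupling of `μ` with another measure, and is
additive in `π`. -/
def IsCausal (m : MeasurableSpace α) (m' : MeasurableSpace β) [MeasurableSpace α]
    [MeasurableSpace β] (μ : Measure α) (π : Measure (α × β)) : Prop :=
  ∀ B, MeasurableSet[m'] B → ∃ g : α → ℝ≥0∞, Measurable[m] g ∧
    ∀ A, MeasurableSet A → π (A ×ˢ B) = ∫⁻ x in A, g x ∂μ

namespace IsCausal

variable {m m₁ : MeasurableSpace α} {m' m₁' : MeasurableSpace β} [mα : MeasurableSpace α]
  [mβ : MeasurableSpace β] {μ : Measure α} {π π₁ : Measure (α × β)}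

lemma mono (h : IsCausal m m' μ π) (hm : m ≤ m₁) (hm' : m₁' ≤ m') : IsCausal m₁ m₁' μ π :=
  fun B hB => (h B (hm' B hB)).imp fun _ hg => ⟨hg.1.mono hm le_rfl, hg.2⟩

lemma add (hm : m ≤ mα) (h : IsCausal m m' μ π) (h₁ : IsCausal m m' μ π₁) :
    IsCausal m m' μ (π + π₁) := by
  intro B hB
  obtain ⟨g, hg, hgπ⟩ := h B hB
  obtain ⟨g₁, hg₁, hgπ₁⟩ := h₁ B hB
  refine ⟨g + g₁, hg.add hg₁, fun A hA => ?_⟩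
  rw [Measure.add_apply, hgπ A hA, hgπ₁ A hA, ← lintegral_add_left (hg.mono hm le_rfl)]
  rfl

lemma of_withDensity (hm : m ≤ mα) {k : α → ℝ≥0∞} (hk : Measurable[m] k)
    (h : IsCausal m m' (μ.withDensity k) π) : IsCausal m m' μ π := by
  intro B hB
  obtain ⟨g, hg, hgπ⟩ := h B hB
  refine ⟨k * g, hk.mul hg, fun A hA => ?_⟩
  rw [hgπ A hA, setLIntegral_withDensity_eq_setLIntegral_mul _ (hk.mono hm le_rfl)
    (hg.mono hm le_rfl) hA]

end IsCausal

variable {Ω : Type*}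

/-- The two coordinates carry the same `m`-information `π`-almost surely. For `m` generated by the
path up to time `t`, this says that the two paths agree up to time `t`. -/
def AgreeOn (m : MeasurableSpace Ω) [MeasurableSpace Ω] (π : Measure (Ω × Ω)) : Prop :=
  ∀ A, MeasurableSet[m] A → Prod.fst ⁻¹' A =ᵐ[π] Prod.snd ⁻¹' A

namespace AgreeOn

variable {m m₁ : MeasurableSpace Ω} [mΩ : MeasurableSpace Ω] {μ : Measure Ω}
  {π π₁ : Measure (Ω × Ω)}

lemma mono (h : AgreeOn m π) (hm : m₁ ≤ m) : AgreeOn m₁ π :=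
  fun A hA => h A (hm A hA)

lemma add (h : AgreeOn m π) (h₁ : AgreeOn m π₁) : AgreeOn m (π + π₁) :=
  fun A hA => ae_add_measure_iff.2 ⟨h A hA, h₁ A hA⟩

lemma map_diag (hm : m ≤ mΩ) : AgreeOn m (μ.map Function.diag) := by
  intro A hA
  have hfst : MeasurableSet (Prod.fst ⁻¹' A : Set (Ω × Ω)) := measurable_fst (hm A hA)
  have hsnd : MeasurableSet (Prod.snd ⁻¹' A : Set (Ω × Ω)) := measurable_snd (hm A hA)
  rw [ae_eq_set, Measure.map_apply measurable_diag (hfst.diff hsnd),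
    Measure.map_apply measurable_diag (hsnd.diff hfst)]
  simp only [Set.preimage_sdiff, Set.preimage_preimage, Function.diag, Set.sdiff_self,
    measure_empty, and_self]

lemma isCausal (hm : m ≤ mΩ) (h : AgreeOn m π) {l : Ω → ℝ≥0∞} (hl : Measurable[m] l)
    (hfst : π.fst = μ.withDensity l) : IsCausal m m μ π := by
  intro B hB
  refine ⟨B.indicator l, hl.indicator hB, fun A hA => ?_⟩
  have hAB : (A ×ˢ B : Set (Ω × Ω)) =ᵐ[π] Prod.fst ⁻¹' (A ∩ B) :=
    (ae_eq_refl _).inter (h B hB).symm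
  rw [measure_congr hAB, ← Measure.fst_apply (hA.inter (hm B hB)), hfst,
    withDensity_apply _ (hA.inter (hm B hB)), setLIntegral_indicator (hm B hB), Set.inter_comm]

end AgreeOn

end Causality

section CondIndepCoupling

variable {Ω : Type*} {m mΩ : MeasurableSpace Ω} [StandardBorelSpace Ω]

/-- The coupling of `μ` and `ν` whose coordinates carry the same `m`-information and are
conditionally independent given it. Its second marginal is `ν` only if `μ` and `ν` coincide on `m`,
since the conditional law under `ν` is sampled from the `m`-information of a `μ`-distributed
point. -/
def condIndepCoupling (hm : m ≤ mΩ) (μ ν : Measure Ω) [IsFiniteMeasure ν] : Measure (Ω × Ω) :=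
  μ ⊗ₘ (condExpKernel ν m).comap id (measurable_id'' hm)

variable {μ ν : Measure Ω} [IsFiniteMeasure ν] (hm : m ≤ mΩ)

instance [IsFiniteMeasure μ] : IsFiniteMeasure (condIndepCoupling hm μ ν) := by
  unfold condIndepCoupling; infer_instance

lemma condIndepCoupling_prod [SFinite μ] {A B : Set Ω} (hA : MeasurableSet A)
    (hB : MeasurableSet B) :
    condIndepCoupling hm μ ν (A ×ˢ B) = ∫⁻ x in A, condExpKernel ν m x B ∂μ :=
  Measure.compProd_apply_prod hA hB

lemma condIndepCoupling_fst [SFinite μ] : (condIndepCoupling hm μ ν).fst = μ :=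
  Measure.fst_compProd _ _

lemma condIndepCoupling_prod_symm [IsFiniteMeasure μ] {A B : Set Ω} (hA : MeasurableSet A)
    (hB : MeasurableSet B) :
    condIndepCoupling hm μ ν (A ×ˢ B) =
      ∫⁻ x, condExpKernel μ m x A * condExpKernel ν m x B ∂μ := by
  have hκA : Measurable[m] fun x => condExpKernel μ m x A := measurable_condExpKernel hA
  have hκB : Measurable[m] fun x => condExpKernel ν m x B := measurable_condExpKernel hB
  rw [condIndepCoupling_prod hm hA hB, lintegral_eq_of_trim_eq hm
    (trim_restrict_eq_trim_withDensity_condExpKernel hm hA) hκB,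
    lintegral_withDensity_eq_lintegral_mul _ (hκA.mono hm le_rfl) (hκB.mono hm le_rfl)]
  rfl

lemma condIndepCoupling_map_swap [IsFiniteMeasure μ] (h : μ.trim hm = ν.trim hm) :
    (condIndepCoupling hm μ ν).map Prod.swap = condIndepCoupling hm ν μ := by
  refine Measure.ext_prod fun {A B} hA hB => ?_
  have hκA : Measurable[m] fun x => condExpKernel ν m x A := measurable_condExpKernel hA
  have hκB : Measurable[m] fun x => condExpKernel μ m x B := measurable_condExpKernel hB
  rw [Measure.map_apply measurable_swap (hA.prod hB), Set.preimage_swap_prod,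
    condIndepCoupling_prod_symm hm hB hA, condIndepCoupling_prod_symm hm hA hB]
  simp only [mul_comm (condExpKernel ν m _ A)]
  exact lintegral_eq_of_trim_eq hm h (hκB.mul hκA)

lemma agreeOn_condIndepCoupling [SFinite μ] (h : μ.trim hm = ν.trim hm) :
    AgreeOn m (condIndepCoupling hm μ ν) := by
  have hnull : ∀ A, MeasurableSet[m] A → condIndepCoupling hm μ ν (A ×ˢ Aᶜ) = 0 := by
    intro A hA
    have hκ : Measurable[m] fun x => condExpKernel ν m x Aᶜ :=
      measurable_condExpKernel (hm A hA).compl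
    have hν := trim_restrict_eq_trim_withDensity_condExpKernel (μ := ν) hm (hm A hA).compl
    rw [condIndepCoupling_prod hm (hm A hA) (hm A hA).compl, ← setLIntegral_trim hm hκ hA, h,
      setLIntegral_trim hm hκ hA, ← withDensity_apply _ (hm A hA), ← trim_measurableSet_eq hm hA,
      ← hν, trim_measurableSet_eq hm hA, Measure.restrict_apply (hm A hA), Set.inter_compl_self,
      measure_empty]
  intro A hA
  refine ae_eq_set.2 ⟨?_, ?_⟩
  · exact measure_mono_null (fun q hq => hq) (hnull A hA)
  · exact measure_mono_null (fun q hq => And.intro hq.2 (not_not.2 hq.1)) (hnull Aᶜ hA.compl)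

lemma isCausal_condIndepCoupling [SFinite μ] : IsCausal m mΩ μ (condIndepCoupling hm μ ν) :=
  fun _ hB => ⟨_, measurable_condExpKernel hB, fun _ hA => condIndepCoupling_prod hm hA hB⟩

end CondIndepCoupling

section Matching

variable {Ω : Type*} {mΩ : MeasurableSpace Ω}

/-- `τ` is the part, still matched at time `s`, of a coupling with first marginal `μ` that is causal
along `ℱ`: it uses up the part of `μ` with density `l`, its coordinates agree up to time `s`, and
it is causal from time `s` on. Bicausality is this property for both `τ` and its swap. -/
structure IsCausalFrom (ℱ : Filtration ℕ mΩ) (s : ℕ) (μ : Measure Ω) (l : Ω → ℝ≥0∞)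
    (τ : Measure (Ω × Ω)) : Prop where
  fst_eq : τ.fst = μ.withDensity l
  agreeOn : AgreeOn (ℱ s) τ
  isCausal : ∀ t, s ≤ t → IsCausal (ℱ t) (ℱ t) μ τ

namespace IsCausalFrom

variable {ℱ : Filtration ℕ mΩ} {s : ℕ} {μ : Measure Ω} {l l₁ : Ω → ℝ≥0∞} {τ : Measure (Ω × Ω)}

lemma of_agreeOn (hl : Measurable[ℱ s] l) (h : τ.fst = μ.withDensity l)
    (hs : ∀ t, s ≤ t → AgreeOn (ℱ t) τ) : IsCausalFrom ℱ s μ l τ where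
  fst_eq := h
  agreeOn := hs s le_rfl
  isCausal t ht := (hs t ht).isCausal (ℱ.le t) (hl.mono (ℱ.mono ht) le_rfl) h

lemma condIndepCoupling_add [StandardBorelSpace Ω] [SFinite μ] (hτ : IsCausalFrom ℱ (s + 1) μ l₁ τ)
    (hl : Measurable[ℱ s] l) (hl₁ : Measurable[ℱ (s + 1)] l₁) (hle : l₁ ≤ l) {ρ : Measure Ω}
    [IsFiniteMeasure ρ] (htrim : (μ.withDensity (l - l₁)).trim (ℱ.le s) = ρ.trim (ℱ.le s)) :
    IsCausalFrom ℱ s μ l (condIndepCoupling (ℱ.le s) (μ.withDensity (l - l₁)) ρ + τ) := by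
  set θ := condIndepCoupling (ℱ.le s) (μ.withDensity (l - l₁)) ρ
  have hθ : IsCausal (ℱ s) mΩ (μ.withDensity (l - l₁)) θ := isCausal_condIndepCoupling _
  have hfst : (θ + τ).fst = μ.withDensity l := by
    rw [Measure.fst_add, condIndepCoupling_fst, hτ.fst_eq,
      ← withDensity_add_right _ (hl₁.mono (ℱ.le _) le_rfl), tsub_add_cancel_of_le hle]
  have hagree : AgreeOn (ℱ s) (θ + τ) :=
    (agreeOn_condIndepCoupling _ htrim).add (hτ.agreeOn.mono (ℱ.mono s.le_succ))
  refine ⟨hfst, hagree, fun t hst => ?_⟩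
  obtain rfl | hlt := hst.eq_or_lt
  · exact hagree.isCausal (ℱ.le s) hl hfst
  · have hk : Measurable[ℱ t] (l - l₁) :=
      (hl.mono (ℱ.mono hst) le_rfl).sub (hl₁.mono (ℱ.mono hlt) le_rfl)
    exact ((hθ.mono (ℱ.mono hst) (ℱ.le t)).of_withDensity (ℱ.le t) hk).add (ℱ.le t)
      (hτ.isCausal t hlt)

end IsCausalFrom

/-- Adapted densities `l s` with respect to `μ` and `l' s` with respect to `ν` of the parts that a
coupling keeps matched up to time `s`: these parts decrease in time and have the same law
on `ℱ s`. -/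
structure IsMatching (ℱ : Filtration ℕ mΩ) (μ ν : Measure Ω) (l l' : ℕ → Ω → ℝ≥0∞) : Prop where
  measurable_left : ∀ s, Measurable[ℱ s] (l s)
  measurable_right : ∀ s, Measurable[ℱ s] (l' s)
  antitone_left : Antitone l
  antitone_right : Antitone l'
  left_zero : l 0 = 1
  right_zero : l' 0 = 1
  trim_eq : ∀ s, (μ.withDensity (l s)).trim (ℱ.le s) = (ν.withDensity (l' s)).trim (ℱ.le s)

namespace IsMatching

variable {ℱ : Filtration ℕ mΩ} {μ ν : Measure Ω} {l l' : ℕ → Ω → ℝ≥0∞}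

lemma swap (h : IsMatching ℱ μ ν l l') : IsMatching ℱ ν μ l' l where
  measurable_left := h.measurable_right
  measurable_right := h.measurable_left
  antitone_left := h.antitone_right
  antitone_right := h.antitone_left
  left_zero := h.right_zero
  right_zero := h.left_zero
  trim_eq s := (h.trim_eq s).symm

lemma withDensity_eq_add (h : IsMatching ℱ μ ν l l') (s : ℕ) :
    μ.withDensity (l s) = μ.withDensity (l s - l (s + 1)) + μ.withDensity (l (s + 1)) := by
  rw [← withDensity_add_right _ ((h.measurable_left (s + 1)).mono (ℱ.le _) le_rfl),
    tsub_add_cancel_of_le (h.antitone_left s.le_succ)]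

lemma isFiniteMeasure_left [IsFiniteMeasure μ] (h : IsMatching ℱ μ ν l l') (s : ℕ) :
    IsFiniteMeasure (μ.withDensity (l s)) :=
  isFiniteMeasure_of_le μ <| (withDensity_mono (.of_forall
    (h.left_zero ▸ h.antitone_left s.zero_le))).trans withDensity_one.le

lemma isFiniteMeasure_residual [IsFiniteMeasure μ] (h : IsMatching ℱ μ ν l l') (s : ℕ) :
    IsFiniteMeasure (μ.withDensity (l s - l (s + 1))) :=
  have := h.isFiniteMeasure_left s
  isFiniteMeasure_of_le _ (withDensity_mono (.of_forall fun _ => tsub_le_self))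

lemma trim_residual_eq [IsFiniteMeasure ν] (h : IsMatching ℱ μ ν l l') (s : ℕ) :
    (μ.withDensity (l s - l (s + 1))).trim (ℱ.le s) =
      (ν.withDensity (l' s - l' (s + 1))).trim (ℱ.le s) := by
  have := h.swap.isFiniteMeasure_left (s + 1)
  have hnext : (μ.withDensity (l (s + 1))).trim (ℱ.le s) =
      (ν.withDensity (l' (s + 1))).trim (ℱ.le s) := by
    rw [← trim_trim (hm₁₂ := ℱ.mono s.le_succ) (hm₂ := ℱ.le (s + 1)), h.trim_eq, trim_trim]
  have hsum := h.trim_eq s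
  rw [h.withDensity_eq_add, h.swap.withDensity_eq_add, trim_add, trim_add, hnext] at hsum
  exact (Measure.add_left_inj _ _ _).1 hsum

lemma withDensity_eq_of_filtration_eq (h : IsMatching ℱ μ ν l l') {T : ℕ} (hT : ℱ T = mΩ) :
    μ.withDensity (l T) = ν.withDensity (l' T) := by
  ext A hA
  have hA' : MeasurableSet[ℱ T] A := hT.ge A hA
  rw [← trim_measurableSet_eq (ℱ.le T) hA', h.trim_eq, trim_measurableSet_eq _ hA']

theorem exists_isCausalFrom [StandardBorelSpace Ω] [IsFiniteMeasure μ] [IsFiniteMeasure ν]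
    (h : IsMatching ℱ μ ν l l') {T : ℕ} (hT : ℱ T = mΩ) {s : ℕ} (hs : s ≤ T) :
    ∃ τ, IsCausalFrom ℱ s μ (l s) τ ∧ IsCausalFrom ℱ s ν (l' s) (τ.map Prod.swap) ∧
      (μ.withDensity (l T)).map Function.diag ≤ τ := by
  induction hs using Nat.decreasingInduction with
  | self =>
    have hfst : ∀ ρ : Measure Ω, (ρ.map Function.diag).fst = ρ := fun ρ =>
      (Measure.fst_map_prodMk measurable_id).trans Measure.map_id
    have hdiag {l : ℕ → Ω → ℝ≥0∞} (hl : Measurable[ℱ T] (l T)) (ρ : Measure Ω) :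
        IsCausalFrom ℱ T ρ (l T) ((ρ.withDensity (l T)).map Function.diag) :=
      .of_agreeOn hl (hfst _) fun t _ => .map_diag (ℱ.le t)
    refine ⟨_, hdiag (h.measurable_left T) μ, ?_, le_rfl⟩
    rw [Measure.map_map measurable_swap measurable_diag, h.withDensity_eq_of_filtration_eq hT]
    exact hdiag (h.measurable_right T) ν
  | of_succ s _ ih =>
    obtain ⟨τ, hτ, hτ', hdiag⟩ := ih
    have := h.isFiniteMeasure_residual s
    have := h.swap.isFiniteMeasure_residual s
    refine ⟨condIndepCoupling (ℱ.le s) (μ.withDensity (l s - l (s + 1)))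
      (ν.withDensity (l' s - l' (s + 1))) + τ, ?_, ?_, hdiag.trans (Measure.le_add_left le_rfl)⟩
    · exact hτ.condIndepCoupling_add (h.measurable_left s) (h.measurable_left (s + 1))
        (h.antitone_left s.le_succ) (h.trim_residual_eq s)
    · rw [Measure.map_add _ _ measurable_swap, condIndepCoupling_map_swap _ (h.trim_residual_eq s)]
      exact hτ'.condIndepCoupling_add (h.measurable_right s) (h.measurable_right (s + 1))
        (h.antitone_right s.le_succ) (h.swap.trim_residual_eq s)

end IsMatching

/-- `f s` is a version bounded by `1` of the density of `c` with respect to `μ` on `ℱ s`; it exists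
when `c ≤ μ`. -/
structure IsDensityProcess (ℱ : Filtration ℕ mΩ) (c μ : Measure Ω) (f : ℕ → Ω → ℝ≥0∞) : Prop where
  measurable : ∀ s, Measurable[ℱ s] (f s)
  le_one : ∀ s, f s ≤ 1
  trim_eq : ∀ s, (μ.withDensity (f s)).trim (ℱ.le s) = c.trim (ℱ.le s)

variable {ℱ : Filtration ℕ mΩ} {c μ ν : Measure Ω} {f f' : ℕ → Ω → ℝ≥0∞}

lemma exists_isDensityProcess [IsFiniteMeasure μ] (ℱ : Filtration ℕ mΩ) (h : c ≤ μ) :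
    ∃ f, IsDensityProcess ℱ c μ f := by
  choose f hf hf1 hftrim using fun s => exists_withDensity_trim_eq_of_le (ℱ.le s) h
  exact ⟨f, hf, hf1, hftrim⟩

/-- The proportion of the common part of two measures with density processes `f` and `f'` that is
retained when, at each of the times `1, …, n`, only the smaller density is kept. -/
def overlap (f f' : ℕ → Ω → ℝ≥0∞) (n : ℕ) : Ω → ℝ≥0∞ :=
  fun x => ∏ i ∈ Finset.range n, min (f (i + 1) x) (f' (i + 1) x)

/-- The density, with respect to the measure with density process `f`, of the part kept matched up
to time `s`. The last factor is `f`, not the minimum: on `ℱ (s + 1)`, multiplication by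
`f (s + 1)` turns that measure into the common part, which makes both matched parts have the
law `overlap f f' s` times the common part there. -/
def matchedDensity (f f' : ℕ → Ω → ℝ≥0∞) : ℕ → Ω → ℝ≥0∞
  | 0 => 1
  | s + 1 => f (s + 1) * overlap f f' s

lemma overlap_comm (f f' : ℕ → Ω → ℝ≥0∞) (n : ℕ) : overlap f f' n = overlap f' f n :=
  funext fun _ => Finset.prod_congr rfl fun _ _ => min_comm _ _

lemma measurable_overlap (hf : ∀ s, Measurable[ℱ s] (f s)) (hf' : ∀ s, Measurable[ℱ s] (f' s))
    (n : ℕ) : Measurable[ℱ n] (overlap f f' n) := by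
  refine Finset.measurable_fun_prod _ fun i hi => ?_
  have hi : i + 1 ≤ n := Finset.mem_range.1 hi
  exact ((hf _).mono (ℱ.mono hi) le_rfl).min ((hf' _).mono (ℱ.mono hi) le_rfl)

lemma measurable_matchedDensity (hf : ∀ s, Measurable[ℱ s] (f s))
    (hf' : ∀ s, Measurable[ℱ s] (f' s)) : ∀ s, Measurable[ℱ s] (matchedDensity f f' s)
  | 0 => measurable_const
  | s + 1 => (hf _).mul ((measurable_overlap hf hf' s).mono (ℱ.mono s.le_succ) le_rfl)

lemma antitone_matchedDensity (hf : ∀ s, f s ≤ 1) : Antitone (matchedDensity f f') := by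
  refine antitone_nat_of_succ_le fun s x => ?_
  cases s with
  | zero => simpa [matchedDensity, overlap] using hf 1 x
  | succ s =>
    simp only [matchedDensity, overlap, Pi.mul_apply, Finset.prod_range_succ]
    calc _ ≤ 1 * _ := mul_le_mul_left (hf _ x) _
      _ ≤ _ := by rw [one_mul, mul_comm]; exact mul_le_mul_left (min_le_left _ _) _

namespace IsDensityProcess

lemma trim_withDensity_matchedDensity_succ (h : IsDensityProcess ℱ c μ f)
    (hf' : ∀ s, Measurable[ℱ s] (f' s)) (s : ℕ) :
    (μ.withDensity (matchedDensity f f' (s + 1))).trim (ℱ.le (s + 1)) =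
      (c.withDensity (overlap f f' s)).trim (ℱ.le (s + 1)) := by
  have ho : Measurable[ℱ (s + 1)] (overlap f f' s) :=
    (measurable_overlap h.measurable hf' s).mono (ℱ.mono s.le_succ) le_rfl
  rw [trim_withDensity _ ho, ← h.trim_eq, ← trim_withDensity _ ho, matchedDensity,
    withDensity_mul _ ((h.measurable _).mono (ℱ.le _) le_rfl) (ho.mono (ℱ.le _) le_rfl)]

lemma lintegral_matchedDensity_succ (h : IsDensityProcess ℱ c μ f)
    (hf' : ∀ s, Measurable[ℱ s] (f' s)) (s : ℕ) :
    ∫⁻ x, matchedDensity f f' (s + 1) x ∂μ = ∫⁻ x, overlap f f' s x ∂c := by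
  have := congrArg (fun ρ => ρ Set.univ) (h.trim_withDensity_matchedDensity_succ hf' s)
  simpa only [trim_measurableSet_eq _ .univ, withDensity_apply _ .univ, Measure.restrict_univ]
    using this

lemma isMatching (h : IsDensityProcess ℱ c μ f) (h' : IsDensityProcess ℱ c ν f')
    (hμν : μ Set.univ = ν Set.univ) (hℱ : ℱ 0 = ⊥) :
    IsMatching ℱ μ ν (matchedDensity f f') (matchedDensity f' f) where
  measurable_left := measurable_matchedDensity h.measurable h'.measurable
  measurable_right := measurable_matchedDensity h'.measurable h.measurable
  antitone_left := antitone_matchedDensity h.le_one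
  antitone_right := antitone_matchedDensity h'.le_one
  left_zero := rfl
  right_zero := rfl
  trim_eq
    | 0 => by
      refine @Measure.ext _ (ℱ 0) _ _ fun A hA => ?_
      rw [trim_measurableSet_eq _ hA, trim_measurableSet_eq _ hA]
      rw [hℱ, MeasurableSpace.measurableSet_bot_iff] at hA
      obtain rfl | rfl := hA <;> simp [matchedDensity, hμν]
    | s + 1 => by
      rw [h.trim_withDensity_matchedDensity_succ h'.measurable,
        h'.trim_withDensity_matchedDensity_succ h.measurable, overlap_comm]

lemma lintegral_one_sub_le [IsFiniteMeasure c] (h : IsDensityProcess ℱ c μ f) (hc : c ≤ μ)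
    (s : ℕ) :
    ∫⁻ x, (1 - f s x) ∂c ≤ μ Set.univ - c Set.univ := by
  have hmass : ∫⁻ x, f s x ∂μ = c Set.univ := by
    rw [← setLIntegral_univ, ← withDensity_apply _ .univ,
      ← trim_measurableSet_eq (ℱ.le s) .univ, h.trim_eq, trim_measurableSet_eq _ .univ]
  have hfin : ∫⁻ x, f s x ∂μ ≠ ∞ := hmass ▸ measure_ne_top c _
  calc ∫⁻ x, (1 - f s x) ∂c ≤ ∫⁻ x, (1 - f s x) ∂μ := lintegral_mono' hc le_rfl
    _ = μ Set.univ - c Set.univ := by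
      rw [← hmass, ← lintegral_one]
      exact lintegral_sub ((h.measurable s).mono (ℱ.le s) le_rfl) hfin (.of_forall (h.le_one s))

lemma measure_univ_le_lintegral_overlap_add [IsFiniteMeasure c] (h : IsDensityProcess ℱ c μ f)
    (h' : IsDensityProcess ℱ c ν f') (hc : c ≤ μ) (hc' : c ≤ ν) (n : ℕ) :
    c Set.univ ≤ ∫⁻ x, overlap f f' n x ∂c +
      n * ((μ Set.univ - c Set.univ) + (ν Set.univ - c Set.univ)) := by
  have hf i : Measurable (f i) := (h.measurable i).mono (ℱ.le i) le_rfl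
  have hf' i : Measurable (f' i) := (h'.measurable i).mono (ℱ.le i) le_rfl
  have ho : Measurable (overlap f f' n) :=
    (measurable_overlap h.measurable h'.measurable n).mono (ℱ.le n) le_rfl
  calc c Set.univ = ∫⁻ _, 1 ∂c := lintegral_one.symm
    _ ≤ ∫⁻ x, overlap f f' n x +
        ∑ i ∈ Finset.range n, ((1 - f (i + 1) x) + (1 - f' (i + 1) x)) ∂c :=
      lintegral_mono fun x => one_le_prod_min_add_sum_one_sub _ fun i _ => h.le_one _ x
    _ = ∫⁻ x, overlap f f' n x ∂c + ∑ i ∈ Finset.range n,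
        (∫⁻ x, (1 - f (i + 1) x) ∂c + ∫⁻ x, (1 - f' (i + 1) x) ∂c) := by
      rw [lintegral_add_left ho, lintegral_finsetSum _ (by fun_prop)]
      congr! 2 with i
      exact lintegral_add_left (by fun_prop) _
    _ ≤ _ := by
      gcongr
      refine (Finset.sum_le_card_nsmul _ _ _ fun i _ => add_le_add
        (h.lintegral_one_sub_le hc _) (h'.lintegral_one_sub_le hc' _)).trans ?_
      rw [Finset.card_range, nsmul_eq_mul]

end IsDensityProcess

end Matching

section Coupling

variable {Ω : Type*} {mΩ : MeasurableSpace Ω} {γ : Measure (Ω × Ω)}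

/-- The law of the common value of the two coordinates on the event that they are equal, a measure
of mass `γ {q | q.1 = q.2}`. -/
def diagonalPart (γ : Measure (Ω × Ω)) : Measure Ω :=
  (γ.restrict {q | q.1 ≠ q.2}ᶜ).fst

lemma diagonalPart_le_fst : diagonalPart γ ≤ γ.fst :=
  Measure.map_mono Measure.restrict_le_self measurable_fst

variable [MeasurableEq Ω]

lemma measurableSet_setOf_fst_ne_snd : MeasurableSet {q : Ω × Ω | q.1 ≠ q.2} :=
  (measurableSet_eq_fun measurable_fst measurable_snd).compl

lemma diagonalPart_le_snd : diagonalPart γ ≤ γ.snd := by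
  have hae : Prod.fst =ᵐ[γ.restrict {q | q.1 ≠ q.2}ᶜ] Prod.snd :=
    (ae_restrict_mem measurableSet_setOf_fst_ne_snd.compl).mono fun _ hq => not_not.1 hq
  rw [diagonalPart, Measure.fst, Measure.map_congr hae]
  exact Measure.map_mono Measure.restrict_le_self measurable_snd

lemma diagonalPart_univ_add_measure_ne :
    diagonalPart γ Set.univ + γ {q | q.1 ≠ q.2} = γ Set.univ := by
  rw [diagonalPart, Measure.fst_univ, Measure.restrict_apply_univ, add_comm,
    measure_add_measure_compl measurableSet_setOf_fst_ne_snd]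

lemma measure_ne_add_le_of_map_diag_le {ρ : Measure Ω} {π : Measure (Ω × Ω)}
    (h : ρ.map Function.diag ≤ π) : π {q | q.1 ≠ q.2} + ρ Set.univ ≤ π Set.univ := by
  have hS : MeasurableSet {q : Ω × Ω | q.1 ≠ q.2} := measurableSet_setOf_fst_ne_snd
  have hρ : ρ Set.univ ≤ π {q | q.1 ≠ q.2}ᶜ := by
    refine le_trans ?_ (h _)
    rw [Measure.map_apply measurable_diag hS.compl]
    exact measure_mono fun _ _ => not_not.2 rfl
  calc _ ≤ _ := add_le_add_right hρ _
    _ = _ := measure_add_measure_compl hS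

end Coupling

theorem exists_mem_Cpl_isCausal_measure_ne_le {Ω : Type*} {mΩ : MeasurableSpace Ω}
    [StandardBorelSpace Ω] {μ ν : Measure Ω} [IsProbabilityMeasure μ] [IsProbabilityMeasure ν]
    {γ : Measure (Ω × Ω)} (hγ : γ ∈ Cpl μ ν) (ℱ : Filtration ℕ mΩ) {n : ℕ} (hbot : ℱ 0 = ⊥)
    (htop : ℱ (n + 1) = mΩ) :
    ∃ π ∈ Cpl μ ν, (∀ t, IsCausal (ℱ t) (ℱ t) μ π) ∧
      (∀ t, IsCausal (ℱ t) (ℱ t) ν (π.map Prod.swap)) ∧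
      π {q | q.1 ≠ q.2} ≤ (2 * n + 1) * γ {q | q.1 ≠ q.2} := by
  obtain ⟨_, hγμ, hγν⟩ := hγ
  set c := diagonalPart γ
  set δ := γ {q | q.1 ≠ q.2}
  have hcμ : c ≤ μ := hγμ ▸ diagonalPart_le_fst
  have hcν : c ≤ ν := hγν ▸ diagonalPart_le_snd
  have := isFiniteMeasure_of_le μ hcμ
  have hcδ : c Set.univ + δ = 1 := diagonalPart_univ_add_measure_ne.trans measure_univ
  have hδ : 1 - c Set.univ = δ := ENNReal.sub_eq_of_eq_add_rev (measure_ne_top c _) hcδ.symm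
  obtain ⟨f, hf⟩ := exists_isDensityProcess ℱ hcμ
  obtain ⟨f', hf'⟩ := exists_isDensityProcess ℱ hcν
  have hmatch := hf.isMatching hf' (measure_univ.trans measure_univ.symm) hbot
  obtain ⟨π, hπ, hπ', hdiag⟩ := hmatch.exists_isCausalFrom htop (Nat.zero_le _)
  have hfst : π.fst = μ := hπ.fst_eq.trans withDensity_one
  have hsnd : π.snd = ν := Measure.fst_map_swap.symm.trans (hπ'.fst_eq.trans withDensity_one)
  have hprob : IsProbabilityMeasure π := ⟨by rw [← Measure.fst_univ, hfst, measure_univ]⟩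
  refine ⟨π, ⟨hprob, hfst, hsnd⟩, fun t => hπ.isCausal t t.zero_le,
    fun t => hπ'.isCausal t t.zero_le, ?_⟩
  set a := ∫⁻ x, overlap f f' n x ∂c
  have hmass : π {q | q.1 ≠ q.2} + a ≤ 1 := by
    have := measure_ne_add_le_of_map_diag_le hdiag
    rwa [measure_univ (μ := π), withDensity_apply _ .univ, setLIntegral_univ,
      hf.lintegral_matchedDensity_succ hf'.measurable] at this
  have ha : c Set.univ ≤ a + n * (δ + δ) := by
    simpa only [measure_univ, hδ] using hf.measure_univ_le_lintegral_overlap_add hf' hcμ hcν n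
  have ha_top : a ≠ ∞ := ne_top_of_le_ne_top ENNReal.one_ne_top (le_of_add_le_right hmass)
  refine (ENNReal.add_le_add_iff_right ha_top).1 (hmass.trans ?_)
  calc 1 = c Set.univ + δ := hcδ.symm
    _ ≤ a + n * (δ + δ) + δ := by gcongr
    _ = _ := by ring

section CondIndep

lemma condIndep_of_condExp_ae_eq {Ω : Type*} {m' m₁ m₂ mΩ : MeasurableSpace Ω}
    [StandardBorelSpace Ω] {P : Measure Ω} [IsFiniteMeasure P] (hm' : m' ≤ m₂) (hm₁ : m₁ ≤ mΩ)
    (hm₂ : m₂ ≤ mΩ) (h : ∀ S, MeasurableSet[m₁] S → P⟦S | m₂⟧ =ᵐ[P] P⟦S | m'⟧) :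
    CondIndep m' m₁ m₂ (hm'.trans hm₂) P := by
  refine (condIndep_iff m' m₁ m₂ _ hm₁ hm₂ P).2 fun S A hS hA => ?_
  have hAint : Integrable (A.indicator fun _ => (1 : ℝ)) P :=
    (integrable_const 1).indicator (hm₂ A hA)
  have hSint : Integrable (S.indicator fun _ => (1 : ℝ)) P :=
    (integrable_const 1).indicator (hm₁ S hS)
  have hmul : A.indicator (P⟦S | m'⟧) = P⟦S | m'⟧ * A.indicator fun _ => (1 : ℝ) := by
    ext x; by_cases hx : x ∈ A <;> simp [hx]
  calc P⟦S ∩ A | m'⟧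
      = P[A.indicator (S.indicator fun _ => (1 : ℝ)) | m'] := by
        rw [Set.indicator_indicator, Set.inter_comm]
    _ =ᵐ[P] P[P[A.indicator (S.indicator fun _ => (1 : ℝ)) | m₂] | m'] :=
        (condExp_condExp_of_le hm' hm₂).symm
    _ =ᵐ[P] P[A.indicator (P⟦S | m'⟧) | m'] := condExp_congr_ae <|
        (condExp_indicator hSint hA).trans ((h S hS).mono fun x hx => by
          simp only [Set.indicator, hx])
    _ = P[P⟦S | m'⟧ * A.indicator fun _ => (1 : ℝ) | m'] := by rw [hmul]
    _ =ᵐ[P] P⟦S | m'⟧ * P⟦A | m'⟧ := condExp_mul_of_stronglyMeasurable_left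
        stronglyMeasurable_condExp
        (hmul ▸ integrable_condExp.indicator (hm₂ A hA)) hAint

lemma condExp_set_ae_eq {Ω : Type*} {m mΩ : MeasurableSpace Ω} {P : Measure Ω} [IsFiniteMeasure P]
    (hm : m ≤ mΩ) {S : Set Ω} (hS : MeasurableSet S) {g : Ω → ℝ≥0∞} (hg : Measurable[m] g)
    (h : ∀ A, MeasurableSet[m] A → P (A ∩ S) = ∫⁻ x in A, g x ∂P) :
    P⟦S | m⟧ =ᵐ[P] fun x => (g x).toReal := by
  set X : Ω → ℝ≥0∞ := S.indicator 1
  have hX : Measurable X := measurable_one.indicator hS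
  have hXint : ∫⁻ x, X x ∂P ≠ ∞ := by
    rw [lintegral_indicator_one hS]; exact measure_ne_top P S
  have hXreal : S.indicator (fun _ => (1 : ℝ)) = fun x => (X x).toReal := by
    ext x; by_cases hx : x ∈ S <;> simp [X, hx]
  have hgX : g =ᵐ[P] P⁻[X | m] := by
    refine ae_eq_condLExp hm P X hg fun A hA => ?_
    rw [← h A hA, setLIntegral_indicator hS, Set.inter_comm]
    exact (setLIntegral_one _).symm
  rw [hXreal]
  exact (toReal_condLExp m hX.aemeasurable hXint).symm.trans
    (hgX.mono fun x hx => congrArg ENNReal.toReal hx.symm)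

lemma IsCausal.condIndep_comap {Ω α β : Type*} {m : MeasurableSpace α} {m' : MeasurableSpace β}
    [mΩ : MeasurableSpace Ω] [mα : MeasurableSpace α] [mβ : MeasurableSpace β]
    [StandardBorelSpace Ω] {P : Measure Ω} [IsFiniteMeasure P] {X : Ω → α} {Y : Ω → β}
    (hX : Measurable X) (hY : Measurable Y) (hm : m ≤ mα) (hm' : m' ≤ mβ)
    (h : IsCausal m m' (P.map X) (P.map fun ω => (X ω, Y ω))) :
    CondIndep (m.comap X) (m'.comap Y) (mα.comap X)
      ((MeasurableSpace.comap_mono hm).trans hX.comap_le) P := by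
  have hle : m.comap X ≤ mα.comap X := MeasurableSpace.comap_mono hm
  refine condIndep_of_condExp_ae_eq hle ((MeasurableSpace.comap_mono hm').trans hY.comap_le)
    hX.comap_le ?_
  rintro _ ⟨B, hB, rfl⟩
  obtain ⟨g, hg, hgP⟩ := h B hB
  have hg' : Measurable g := hg.mono hm le_rfl
  have hYB : MeasurableSet (Y ⁻¹' B) := hY (hm' B hB)
  have hint : ∀ A, MeasurableSet[mα.comap X] A → P (A ∩ Y ⁻¹' B) = ∫⁻ ω in A, g (X ω) ∂P := by
    rintro _ ⟨A, hA, rfl⟩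
    rw [← setLIntegral_map hA hg' hX, ← hgP A hA,
      Measure.map_apply (hX.prodMk hY) (hA.prod (hm' B hB)), Set.mk_preimage_prod]
  exact (condExp_set_ae_eq hX.comap_le hYB (hg'.comp (comap_measurable X)) hint).trans
    (condExp_set_ae_eq (hle.trans hX.comap_le) hYB (hg.comp (comap_measurable X))
      fun A hA => hint A (hle A hA)).symm

end CondIndep

section PathSpace

variable {d T : ℕ}

lemma comap_restr_mono {s t : ℕ} (hst : s ≤ t) (ht : t ≤ T) :
    (inferInstance : MeasurableSpace (Traj d s)).comap (restr d (hst.trans ht)) ≤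
      (inferInstance : MeasurableSpace (Traj d t)).comap (restr d ht) := by
  rw [show restr d (hst.trans ht) = restr d hst ∘ restr d ht from rfl,
    ← MeasurableSpace.comap_comp]
  exact MeasurableSpace.comap_mono (measurable_restr d hst).comap_le

/-- The canonical filtration of the path space: the σ-algebra at time `t` is generated by the first
`t` coordinates, and is constant for `t ≥ T`. -/
def pathFiltration (d T : ℕ) : Filtration ℕ (inferInstance : MeasurableSpace (Traj d T)) where
  seq t := (inferInstance : MeasurableSpace (Traj d (min t T))).comap (restr d (min_le_right t T))
  mono' _ _ hst := comap_restr_mono (min_le_min_right T hst) (min_le_right _ T)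
  le' _ := (measurable_restr d _).comap_le

lemma pathFiltration_of_le {t : ℕ} (h : t ≤ T) :
    pathFiltration d T t = (inferInstance : MeasurableSpace (Traj d t)).comap (restr d h) :=
  le_antisymm (comap_restr_mono (min_le_left t T) h)
    (comap_restr_mono (le_min le_rfl h) (min_le_right t T))

lemma pathFiltration_zero : pathFiltration d T 0 = ⊥ := by
  rw [pathFiltration_of_le T.zero_le, Subsingleton.elim (restr d T.zero_le) fun _ => 0,
    MeasurableSpace.comap_const]

lemma pathFiltration_self :
    pathFiltration d T T = (inferInstance : MeasurableSpace (Traj d T)) :=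
  (pathFiltration_of_le le_rfl).trans MeasurableSpace.comap_id

lemma comap_fst_pathFiltration {t : ℕ} (h : t ≤ T) :
    (pathFiltration d T t).comap Prod.fst = sigmaX d T h := by
  rw [pathFiltration_of_le h, MeasurableSpace.comap_comp]; rfl

lemma comap_snd_pathFiltration {t : ℕ} (h : t ≤ T) :
    (pathFiltration d T t).comap Prod.snd = sigmaY d T h := by
  rw [pathFiltration_of_le h, MeasurableSpace.comap_comp]; rfl

lemma isBicausal_of_isCausal {π : Measure (Traj d T × Traj d T)} [IsFiniteMeasure π]
    (h : ∀ t, IsCausal (pathFiltration d T t) (pathFiltration d T t) π.fst π)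
    (h' : ∀ t, IsCausal (pathFiltration d T t) (pathFiltration d T t) π.snd (π.map Prod.swap)) :
    IsBicausal d T π := by
  intro t _ ht
  have hle := (pathFiltration d T).le t
  have hXY : IsCausal (pathFiltration d T t) (pathFiltration d T t) (π.map Prod.fst)
      (π.map fun q => (q.1, q.2)) := by
    rw [show (fun q : Traj d T × Traj d T => (q.1, q.2)) = id from rfl, Measure.map_id]
    exact h t
  have hX := hXY.condIndep_comap measurable_fst measurable_snd hle hle
  have hY := (h' t).condIndep_comap measurable_snd measurable_fst hle hle
  simp only [comap_fst_pathFiltration (Nat.le_of_succ_le ht),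
    comap_snd_pathFiltration (Nat.le_of_succ_le ht)] at hX hY
  exact ⟨hX, hY⟩

lemma exists_mem_BCpl_measure_ne_le (hT : 1 ≤ T) {μ ν : Measure (Traj d T)}
    [IsProbabilityMeasure μ] [IsProbabilityMeasure ν] {γ : Measure (Traj d T × Traj d T)}
    (hγ : γ ∈ Cpl μ ν) :
    ∃ π ∈ BCpl μ ν, π {q | q.1 ≠ q.2} ≤ ((2 * T - 1 : ℕ) : ℝ≥0∞) * γ {q | q.1 ≠ q.2} := by
  obtain ⟨n, rfl⟩ := Nat.exists_eq_add_of_le' hT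
  obtain ⟨π, hπ, h, h', hle⟩ := exists_mem_Cpl_isCausal_measure_ne_le hγ
    (pathFiltration d (n + 1)) pathFiltration_zero pathFiltration_self
  obtain ⟨_, rfl, rfl⟩ := id hπ
  exact ⟨π, ⟨hπ, inferInstance, isBicausal_of_isCausal h h'⟩, by exact_mod_cast hle⟩

end PathSpace

section Distances

lemma lintegral_le_mul_measure_ne {Ω : Type*} [MeasurableSpace Ω] [MeasurableEq Ω]
    {μ ν : Measure Ω} {π : Measure (Ω × Ω)} (hπ : π ∈ Cpl μ ν) {K : Set Ω} (hμ : μ Kᶜ = 0)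
    (hν : ν Kᶜ = 0) {c : Ω × Ω → ℝ≥0∞} {C : ℝ≥0∞} (hdiag : ∀ x, c (x, x) = 0)
    (hc : ∀ x ∈ K, ∀ y ∈ K, c (x, y) ≤ C) :
    ∫⁻ q, c q ∂π ≤ C * π {q | q.1 ≠ q.2} := by
  obtain ⟨-, rfl, rfl⟩ := hπ
  have hfst : ∀ᵐ q ∂π, q.1 ∈ K := ae_of_ae_map measurable_fst.aemeasurable hμ
  have hsnd : ∀ᵐ q ∂π, q.2 ∈ K := ae_of_ae_map measurable_snd.aemeasurable hν
  rw [← lintegral_indicator_const measurableSet_setOf_fst_ne_snd]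
  refine lintegral_mono_ae ?_
  filter_upwards [hfst, hsnd] with q hq₁ hq₂
  by_cases hq : q ∈ {q : Ω × Ω | q.1 ≠ q.2}
  · rw [Set.indicator_of_mem hq]
    exact hc _ hq₁ _ hq₂
  · obtain ⟨x, y⟩ := q
    obtain rfl : x = y := not_not.1 hq
    simp only [hdiag, zero_le]

variable {d T : ℕ} {μ ν : Measure (Traj d T)}

lemma TVw_one_eq : TVw (fun _ => (1 : ℝ)) μ ν = ⨅ π ∈ Cpl μ ν, 2 * π {q | q.1 ≠ q.2} := by
  simp only [TVw, ENNReal.ofReal_one, one_add_one_eq_two, setLIntegral_const]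

lemma ATVw_one_eq : ATVw (fun _ => (1 : ℝ)) μ ν = ⨅ π ∈ BCpl μ ν, 2 * π {q | q.1 ≠ q.2} := by
  simp only [ATVw, ENNReal.ofReal_one, one_add_one_eq_two, setLIntegral_const]

variable [IsProbabilityMeasure μ] [IsProbabilityMeasure ν]

lemma ATVw_one_le (hT : 1 ≤ T) : ATVw (fun _ => (1 : ℝ)) μ ν ≤
    ((2 * T - 1 : ℕ) : ℝ≥0∞) * TVw (fun _ => (1 : ℝ)) μ ν := by
  have hne : ((2 * T - 1 : ℕ) : ℝ≥0∞) ≠ 0 := Nat.cast_ne_zero.2 (by omega)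
  simp only [ATVw_one_eq, TVw_one_eq, ENNReal.mul_iInf_of_ne hne (ENNReal.natCast_ne_top _)]
  refine le_iInf₂ fun γ hγ => ?_
  obtain ⟨π, hπ, hle⟩ := exists_mem_BCpl_measure_ne_le hT hγ
  refine (iInf₂_le π hπ).trans ?_
  rw [mul_left_comm]
  gcongr

lemma BCpl_nonempty (hT : 1 ≤ T) : (BCpl μ ν).Nonempty := by
  have hprod : μ.prod ν ∈ Cpl μ ν := ⟨inferInstance, by simp, by simp⟩
  obtain ⟨π, hπ, -⟩ := exists_mem_BCpl_measure_ne_le hT hprod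
  exact ⟨π, hπ⟩

lemma AWpow_le_mul_ATVw_one (hT : 1 ≤ T) {p : ℝ} (hp : 0 < p) {K : Set (Traj d T)} {D : ℝ}
    (hdiam : ∀ x ∈ K, ∀ y ∈ K, (∑ i, ∑ j, |x i j - y i j| ^ p) ^ (1 / p) ≤ D)
    (hμ : μ Kᶜ = 0) (hν : ν Kᶜ = 0) :
    AWpow p μ ν ≤ ENNReal.ofReal (D ^ p) * ATVw (fun _ => (1 : ℝ)) μ ν := by
  have : Nonempty (BCpl μ ν) := (BCpl_nonempty hT).to_subtype
  have hcost : ∀ x ∈ K, ∀ y ∈ K,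
      ENNReal.ofReal (∑ i, ∑ j, |x i j - y i j| ^ p) ≤ ENNReal.ofReal (D ^ p) := by
    intro x hx y hy
    have hxy := hdiam x hx y hy
    have hD : 0 ≤ D := le_trans (by positivity) hxy
    rw [one_div] at hxy
    exact ENNReal.ofReal_le_ofReal ((Real.rpow_inv_le_iff_of_pos (by positivity) hD hp).1 hxy)
  simp only [AWpow, ATVw_one_eq, iInf_subtype']
  rw [ENNReal.mul_iInf fun h => absurd h ENNReal.ofReal_ne_top]
  refine iInf_mono fun π => (lintegral_le_mul_measure_ne π.2.1 hμ hν
    (fun x => by simp [Real.zero_rpow hp.ne']) hcost).trans ?_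
  gcongr
  exact le_mul_of_one_le_left' one_le_two

end Distances

theorem aw_le_diam_atv_general {d T : ℕ} (hT : 1 ≤ T) {p : ℝ} (hp : 0 < p)
    {K : Set (Traj d T)} {D : ℝ}
    (hdiam : ∀ x ∈ K, ∀ y ∈ K, (∑ i, ∑ j, |x i j - y i j| ^ p) ^ (1 / p) ≤ D)
    {μ ν : Measure (Traj d T)} [IsProbabilityMeasure μ] [IsProbabilityMeasure ν]
    (hμK : μ Kᶜ = 0) (hνK : ν Kᶜ = 0) :
    AWpow p μ ν ≤ ENNReal.ofReal (D ^ p) * ATVw (fun _ => (1 : ℝ)) μ ν ∧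
    ENNReal.ofReal (D ^ p) * ATVw (fun _ => (1 : ℝ)) μ ν ≤
      ((2 * T - 1 : ℕ) : ℝ≥0∞) * (ENNReal.ofReal (D ^ p) * TVw (fun _ => (1 : ℝ)) μ ν) := by
  refine ⟨AWpow_le_mul_ATVw_one hT hp hdiam hμK hνK, ?_⟩
  rw [mul_left_comm]
  gcongr
  exact ATVw_one_le hT

/-- For measures concentrated on a set of finite `p`-diameter `D`,
`AW_p^p(μ,ν) ≤ D^p ATV(μ,ν) ≤ (2T-1) D^p TV(μ,ν)`. -/
theorem aw_le_diam_atv (d T : ℕ) (hd : 1 ≤ d) (hT : 1 ≤ T) (p : ℝ) (hp : 1 ≤ p)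
    (𝒦 : Set (Traj d T)) (D : ℝ) (hD0 : 0 ≤ D)
    (hdiam : ∀ x ∈ 𝒦, ∀ y ∈ 𝒦, (∑ i, ∑ j, |x i j - y i j| ^ p) ^ (1 / p) ≤ D)
    (μ ν : Measure (Traj d T)) [IsProbabilityMeasure μ] [IsProbabilityMeasure ν]
    (hμK : μ 𝒦ᶜ = 0) (hνK : ν 𝒦ᶜ = 0) :
    AWpow p μ ν ≤ ENNReal.ofReal (D ^ p) * ATVw (fun _ => (1 : ℝ)) μ ν ∧
    ENNReal.ofReal (D ^ p) * ATVw (fun _ => (1 : ℝ)) μ ν ≤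
      ((2 * T - 1 : ℕ) : ℝ≥0∞) * (ENNReal.ofReal (D ^ p) * TVw (fun _ => (1 : ℝ)) μ ν) :=
  aw_le_diam_atv_general hT (zero_lt_one.trans_le hp) hdiam hμK hνK

end
end

section
/- Let μ, ν be Borel probability measures on ℝ^{dT} and let w : ℝ^{dT} → [0, ∞) be measurable with ∫ w dμ + ∫ w dν < ∞. Then TV_w(μ, ν) = ∫ w dμ + ∫ w dν − 2 ∫ w d(μ ⊓ ν), where μ ⊓ ν is the greatest lower bound of μ and ν in the lattice of finite Borel measures on ℝ^{dT} (ordered by setwise comparison). Equivalently, the supremum over all couplings π of ∫ 2 w(x) 1_{x = y} dπ(x, y) equals 2 ∫ w d(μ ⊓ ν). -/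
open MeasureTheory ProbabilityTheory
open scoped ENNReal

noncomputable section

/-!
Splitting the cost of a coupling `π` along the diagonal gives
`∫_{x ≠ y} (w(x) + w(y)) dπ = ∫ w dμ + ∫ w dν - 2 ∫ w dρ`, where `ρ` is the first marginal of `π`
restricted to the diagonal, so the problem is to make `ρ` as large as possible. On the diagonal both
coordinates agree, so `ρ` lies below both marginals and hence below `μ ⊓ ν`; equality is reached by
leaving the common part `μ ⊓ ν` in place and coupling the remainders `μ - μ ⊓ ν` and `ν - μ ⊓ ν`
independently.
-/

open Set

section NormalizedProduct

variable {α β : Type*} [MeasurableSpace α] [MeasurableSpace β] {μ : Measure α} {ν : Measure β}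

lemma measure_univ_mul_inv_smul_self (μ : Measure α) [IsFiniteMeasure μ] :
    (μ univ * (μ univ)⁻¹) • μ = μ := by
  rcases eq_or_ne μ 0 with rfl | hμ
  · exact smul_zero _
  · rw [ENNReal.mul_inv_cancel (Measure.measure_univ_ne_zero.mpr hμ) (measure_ne_top μ univ),
      one_smul]

/-- The independent coupling of two finite measures of equal total mass: the product measure,
rescaled so that its marginals are the given measures. For measures of mass zero it is `0`. -/
def normalizedProd (μ : Measure α) (ν : Measure β) : Measure (α × β) :=
  (μ univ)⁻¹ • μ.prod ν

lemma fst_normalizedProd [IsFiniteMeasure μ] [SFinite ν] (hmass : μ univ = ν univ) :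
    (normalizedProd μ ν).fst = μ := by
  rw [normalizedProd, Measure.fst, Measure.map_smul, Measure.map_fst_prod, smul_smul, ← hmass,
    mul_comm, measure_univ_mul_inv_smul_self]

lemma snd_normalizedProd [SFinite μ] [IsFiniteMeasure ν] (hmass : μ univ = ν univ) :
    (normalizedProd μ ν).snd = ν := by
  rw [normalizedProd, Measure.snd, Measure.map_smul, Measure.map_snd_prod, smul_smul, hmass,
    mul_comm, measure_univ_mul_inv_smul_self]

end NormalizedProduct

lemma setLIntegral_const_mul_fst {α β : Type*} [MeasurableSpace α] [MeasurableSpace β]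
    {f : α → ℝ≥0∞} (hf : Measurable f) (c : ℝ≥0∞) (π : Measure (α × β)) (s : Set (α × β)) :
    ∫⁻ q in s, c * f q.1 ∂π = c * ∫⁻ x, f x ∂(π.restrict s).fst := by
  rw [lintegral_const_mul _ (by fun_prop), Measure.fst, lintegral_map hf measurable_fst]

section Diagonal

variable {α : Type*} [MeasurableSpace α]

lemma fst_map_diag (μ : Measure α) : (μ.map Function.diag).fst = μ := by
  rw [Measure.fst, Measure.map_map measurable_fst measurable_diag, Function.fst_comp_diag,
    Measure.map_id]

lemma snd_map_diag (μ : Measure α) : (μ.map Function.diag).snd = μ := by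
  rw [Measure.snd, Measure.map_map measurable_snd measurable_diag, Function.snd_comp_diag,
    Measure.map_id]

variable [MeasurableEq α]

lemma fst_restrict_diagonal_eq_snd (π : Measure (α × α)) :
    (π.restrict (diagonal α)).fst = (π.restrict (diagonal α)).snd :=
  Measure.map_congr (ae_restrict_mem measurableSet_diagonal)

lemma fst_restrict_diagonal_le_inf (π : Measure (α × α)) :
    (π.restrict (diagonal α)).fst ≤ π.fst ⊓ π.snd := by
  refine le_inf (Measure.fst_mono Measure.restrict_le_self) ?_
  rw [fst_restrict_diagonal_eq_snd]
  exact Measure.snd_mono Measure.restrict_le_self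

lemma restrict_diagonal_map_diag (μ : Measure α) :
    (μ.map Function.diag).restrict (diagonal α) = μ.map Function.diag := by
  have hpreimage : Function.diag ⁻¹' diagonal α = univ := eq_univ_of_forall mem_diagonal
  rw [Measure.restrict_map measurable_diag measurableSet_diagonal, hpreimage,
    Measure.restrict_univ]

lemma setLIntegral_compl_diagonal_add_setLIntegral_diagonal {f : α → ℝ≥0∞} (hf : Measurable f)
    (π : Measure (α × α)) :
    ∫⁻ q in (diagonal α)ᶜ, (f q.1 + f q.2) ∂π + ∫⁻ q in diagonal α, 2 * f q.1 ∂π =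
      ∫⁻ x, f x ∂π.fst + ∫⁻ x, f x ∂π.snd := by
  have hdiagonal :
      ∫⁻ q in diagonal α, 2 * f q.1 ∂π = ∫⁻ q in diagonal α, (f q.1 + f q.2) ∂π :=
    setLIntegral_congr_fun measurableSet_diagonal fun q (hq : q.1 = q.2) => by
      simp only [← hq, two_mul]
  calc
    _ = ∫⁻ q, (f q.1 + f q.2) ∂π := by
      rw [hdiagonal, add_comm, lintegral_add_compl _ measurableSet_diagonal]
    _ = ∫⁻ q, f q.1 ∂π + ∫⁻ q, f q.2 ∂π := lintegral_add_left (hf.comp measurable_fst) _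
    _ = _ := by
      rw [Measure.fst, Measure.snd, lintegral_map hf measurable_fst,
        lintegral_map hf measurable_snd]

end Diagonal

section MaximalCoupling

variable {α : Type*} [MeasurableSpace α] {μ ν : Measure α}

instance isFiniteMeasure_inf [IsFiniteMeasure μ] : IsFiniteMeasure (μ ⊓ ν) :=
  isFiniteMeasure_of_le μ inf_le_left

lemma sub_inf_univ_eq_sub_inf_univ [IsFiniteMeasure μ] (hmass : μ univ = ν univ) :
    (μ - μ ⊓ ν) univ = (ν - μ ⊓ ν) univ := by
  rw [Measure.sub_apply .univ inf_le_left, Measure.sub_apply .univ inf_le_right, hmass]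

/-- The coupling of two finite measures of equal mass that gives the diagonal as much mass as
possible: the common part `μ ⊓ ν` is carried by the diagonal, and the remainders are coupled
independently. -/
def maximalCoupling (μ ν : Measure α) : Measure (α × α) :=
  (μ ⊓ ν).map Function.diag + normalizedProd (μ - μ ⊓ ν) (ν - μ ⊓ ν)

section Marginals

variable [IsFiniteMeasure μ] [IsFiniteMeasure ν]

lemma fst_maximalCoupling (hmass : μ univ = ν univ) : (maximalCoupling μ ν).fst = μ := by
  rw [maximalCoupling, Measure.fst_add, fst_map_diag,
    fst_normalizedProd (sub_inf_univ_eq_sub_inf_univ hmass), add_comm,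
    Measure.sub_add_cancel_of_le inf_le_left]

lemma snd_maximalCoupling (hmass : μ univ = ν univ) : (maximalCoupling μ ν).snd = ν := by
  rw [maximalCoupling, Measure.snd_add, snd_map_diag,
    snd_normalizedProd (sub_inf_univ_eq_sub_inf_univ hmass), add_comm,
    Measure.sub_add_cancel_of_le inf_le_right]

lemma fst_restrict_diagonal_maximalCoupling [MeasurableEq α] (hmass : μ univ = ν univ) :
    ((maximalCoupling μ ν).restrict (diagonal α)).fst = μ ⊓ ν := by
  apply le_antisymm
  · simpa only [fst_maximalCoupling hmass, snd_maximalCoupling hmass] using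
      fst_restrict_diagonal_le_inf (maximalCoupling μ ν)
  · rw [maximalCoupling, Measure.restrict_add, Measure.fst_add, restrict_diagonal_map_diag,
      fst_map_diag]
    exact Measure.le_add_right le_rfl

end Marginals

lemma maximalCoupling_mem_Cpl (μ ν : Measure α) [IsProbabilityMeasure μ]
    [IsProbabilityMeasure ν] : maximalCoupling μ ν ∈ Cpl μ ν := by
  have hmass : μ univ = ν univ := by simp only [measure_univ]
  refine ⟨⟨?_⟩, fst_maximalCoupling hmass, snd_maximalCoupling hmass⟩
  rw [← Measure.fst_univ, fst_maximalCoupling hmass, measure_univ]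

end MaximalCoupling

section Representation

variable {α : Type*} [MeasurableSpace α] [MeasurableEq α] {μ ν : Measure α} {f : α → ℝ≥0∞}

lemma setLIntegral_diagonal_le_of_mem_Cpl (hf : Measurable f) {π : Measure (α × α)}
    (hπ : π ∈ Cpl μ ν) :
    ∫⁻ q in diagonal α, 2 * f q.1 ∂π ≤ 2 * ∫⁻ x, f x ∂(μ ⊓ ν) := by
  obtain ⟨-, rfl, rfl⟩ := hπ
  rw [setLIntegral_const_mul_fst hf]
  gcongr
  exact fst_restrict_diagonal_le_inf π

lemma setLIntegral_diagonal_maximalCoupling [IsFiniteMeasure μ] [IsFiniteMeasure ν]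
    (hf : Measurable f) (hmass : μ univ = ν univ) :
    ∫⁻ q in diagonal α, 2 * f q.1 ∂(maximalCoupling μ ν) = 2 * ∫⁻ x, f x ∂(μ ⊓ ν) := by
  rw [setLIntegral_const_mul_fst hf, fst_restrict_diagonal_maximalCoupling hmass]

variable [IsProbabilityMeasure μ] [IsProbabilityMeasure ν]

lemma iSup_setLIntegral_diagonal (hf : Measurable f) :
    ⨆ π ∈ Cpl μ ν, ∫⁻ q in diagonal α, 2 * f q.1 ∂π = 2 * ∫⁻ x, f x ∂(μ ⊓ ν) := by
  apply le_antisymm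
  · exact iSup₂_le fun π hπ => setLIntegral_diagonal_le_of_mem_Cpl hf hπ
  · refine le_iSup₂_of_le _ (maximalCoupling_mem_Cpl μ ν) ?_
    rw [setLIntegral_diagonal_maximalCoupling hf (by simp only [measure_univ])]

lemma iInf_setLIntegral_compl_diagonal (hf : Measurable f) (hfin : ∫⁻ x, f x ∂(μ ⊓ ν) ≠ ∞) :
    ⨅ π ∈ Cpl μ ν, ∫⁻ q in (diagonal α)ᶜ, (f q.1 + f q.2) ∂π =
      ∫⁻ x, f x ∂μ + ∫⁻ x, f x ∂ν - 2 * ∫⁻ x, f x ∂(μ ⊓ ν) := by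
  have hsplit {π : Measure (α × α)} (hπ : π ∈ Cpl μ ν) :
      ∫⁻ q in (diagonal α)ᶜ, (f q.1 + f q.2) ∂π + ∫⁻ q in diagonal α, 2 * f q.1 ∂π =
        ∫⁻ x, f x ∂μ + ∫⁻ x, f x ∂ν := by
    obtain ⟨-, rfl, rfl⟩ := hπ
    exact setLIntegral_compl_diagonal_add_setLIntegral_diagonal hf π
  apply le_antisymm
  · have hmax := maximalCoupling_mem_Cpl μ ν
    refine iInf₂_le_of_le _ hmax (ENNReal.eq_sub_of_add_eq (by finiteness) ?_).le
    rw [← hsplit hmax, setLIntegral_diagonal_maximalCoupling hf (by simp only [measure_univ])]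
  · refine le_iInf₂ fun π hπ => tsub_le_iff_right.mpr ?_
    rw [← hsplit hπ]
    gcongr
    exact setLIntegral_diagonal_le_of_mem_Cpl hf hπ

theorem tv_w_representation_general (hf : Measurable f) (hfin : ∫⁻ x, f x ∂(μ ⊓ ν) ≠ ∞) :
    ⨅ π ∈ Cpl μ ν, ∫⁻ q in {q : α × α | q.1 ≠ q.2}, (f q.1 + f q.2) ∂π =
      ∫⁻ x, f x ∂μ + ∫⁻ x, f x ∂ν - 2 * ∫⁻ x, f x ∂(μ ⊓ ν) ∧
    ⨆ π ∈ Cpl μ ν, ∫⁻ q in {q : α × α | q.1 = q.2}, 2 * f q.1 ∂π =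
      2 * ∫⁻ x, f x ∂(μ ⊓ ν) :=
  ⟨iInf_setLIntegral_compl_diagonal hf hfin, iSup_setLIntegral_diagonal hf⟩

end Representation

/-- Representation of the weighted total variation:
`TV_w(μ,ν) = ∫ w dμ + ∫ w dν - 2∫ w d(μ ⊓ ν)`, and the supremum over couplings of
`∫ 2 w(x) 1_{x=y} dπ` equals `2 ∫ w d(μ ⊓ ν)`. -/
theorem tv_w_representation (d T : ℕ) (hd : 1 ≤ d) (hT : 1 ≤ T)
    (μ ν : Measure (Traj d T)) [IsProbabilityMeasure μ] [IsProbabilityMeasure ν]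
    (w : Traj d T → ℝ) (hwm : Measurable w) (hw0 : ∀ x, 0 ≤ w x)
    (hwint : (∫⁻ x, ENNReal.ofReal (w x) ∂μ) + (∫⁻ x, ENNReal.ofReal (w x) ∂ν) < ⊤) :
    TVw w μ ν =
      (∫⁻ x, ENNReal.ofReal (w x) ∂μ) + (∫⁻ x, ENNReal.ofReal (w x) ∂ν)
        - 2 * ∫⁻ x, ENNReal.ofReal (w x) ∂(μ ⊓ ν) ∧
    (⨆ π ∈ Cpl μ ν, ∫⁻ q in {q : Traj d T × Traj d T | q.1 = q.2},
        2 * ENNReal.ofReal (w q.1) ∂π)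
      = 2 * ∫⁻ x, ENNReal.ofReal (w x) ∂(μ ⊓ ν) := by
  have hle : ∫⁻ x, ENNReal.ofReal (w x) ∂(μ ⊓ ν) ≤ ∫⁻ x, ENNReal.ofReal (w x) ∂μ :=
    lintegral_mono' inf_le_left le_rfl
  exact tv_w_representation_general hwm.ennreal_ofReal
    (hle.trans_lt (ENNReal.add_lt_top.mp hwint).1).ne

end
end
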